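/- arXiv:math/0512345 — 12 statements merged into one kernel-verified Lean document; each statement's English description precedes it below -/
import Mathlib

section
/- Let β < 0 and let f be a non-constant solution of equation (1) on an interval J. If there exists τ ∈ J with f''(τ) ≤ 0, then f''(t) < 0 for every t ∈ J with t > τ. -/
/-!
Multiplying the equation `f''' + f f'' = β f'²` by `exp ∫ f` gives `(f'' exp ∫ f)' = β f'² exp ∫ f`,
which is nonpositive, so `f'' exp ∫ f` is nonincreasing. If `f'' τ ≤ 0 ≤ f'' t` with `τ < t`, then
`f''` vanishes on `[τ, t]`, and the equation itself forces `f' τ = 0`. So `f` has the same Cauchy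
data at `τ` as the constant `f τ`, which is also a solution, and uniqueness makes `f` constant.
-/

open Set

section Gronwall

variable {E : Type*} [NormedAddCommGroup E] [NormedSpace ℝ E] {g g' : ℝ → E}

theorem eqOn_zero_Icc_of_norm_deriv_le_of_eq_zero_left {a b : ℝ} {K : ℝ → ℝ}
    (hg : ∀ x ∈ Icc a b, HasDerivWithinAt g (g' x) (Icc a b) x) (hK : ContinuousOn K (Icc a b))
    (bound : ∀ x ∈ Icc a b, ‖g' x‖ ≤ K x * ‖g x‖) (ha : g a = 0) :
    EqOn g 0 (Icc a b) := by
  obtain ⟨C, hC⟩ := isCompact_Icc.bddAbove_image hK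
  refine eq_zero_of_abs_deriv_le_mul_abs_self_of_eq_zero_right (f' := g') (K := C)
    (fun x hx ↦ (hg x hx).continuousWithinAt) (fun x hx ↦ ?_) ha (fun x hx ↦ ?_)
  · exact (hg x (Ico_subset_Icc_self hx)).mono_of_mem_nhdsWithin (Icc_mem_nhdsGE_of_mem hx)
  · have hx := Ico_subset_Icc_self hx
    exact (bound x hx).trans (by gcongr; exact hC (mem_image_of_mem K hx))

theorem eqOn_zero_Icc_of_norm_deriv_le_of_eq_zero_right {a b : ℝ} {K : ℝ → ℝ}
    (hg : ∀ x ∈ Icc a b, HasDerivWithinAt g (g' x) (Icc a b) x) (hK : ContinuousOn K (Icc a b))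
    (bound : ∀ x ∈ Icc a b, ‖g' x‖ ≤ K x * ‖g x‖) (hb : g b = 0) :
    EqOn g 0 (Icc a b) := by
  have maps_neg : MapsTo Neg.neg (Icc (-b) (-a)) (Icc a b) := fun x hx ↦
    ⟨le_neg.mpr hx.2, neg_le.mpr hx.1⟩
  have reflected : EqOn (fun x ↦ g (-x)) 0 (Icc (-b) (-a)) := by
    refine eqOn_zero_Icc_of_norm_deriv_le_of_eq_zero_left (g' := fun x ↦ -g' (-x))
      (K := fun x ↦ K (-x)) (fun x hx ↦ ?_) (hK.comp continuousOn_neg maps_neg)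
      (fun x hx ↦ ?_) (by simpa only [neg_neg] using hb)
    · simpa only [neg_smul, one_smul, Function.comp_def] using
        (hg (-x) (maps_neg hx)).scomp x (hasDerivWithinAt_neg x _) maps_neg
    · simpa only [norm_neg] using bound (-x) (maps_neg hx)
  intro x hx
  simpa only [neg_neg, Pi.zero_apply] using reflected ⟨neg_le_neg hx.2, neg_le_neg hx.1⟩

theorem eqOn_zero_of_norm_deriv_le_of_ordConnected {J : Set ℝ} {K : ℝ → ℝ} {m : ℝ}
    (hJ : J.OrdConnected) (hg : ∀ x ∈ J, HasDerivWithinAt g (g' x) J x) (hK : ContinuousOn K J)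
    (bound : ∀ x ∈ J, ‖g' x‖ ≤ K x * ‖g x‖) (hm : m ∈ J) (hgm : g m = 0) :
    EqOn g 0 J := by
  intro x hx
  rcases le_total m x with hmx | hxm
  · have hsub : Icc m x ⊆ J := hJ.out hm hx
    exact eqOn_zero_Icc_of_norm_deriv_le_of_eq_zero_left
      (fun y hy ↦ (hg y (hsub hy)).mono hsub) (hK.mono hsub)
      (fun y hy ↦ bound y (hsub hy)) hgm (right_mem_Icc.mpr hmx)
  · have hsub : Icc x m ⊆ J := hJ.out hx hm
    exact eqOn_zero_Icc_of_norm_deriv_le_of_eq_zero_right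
      (fun y hy ↦ (hg y (hsub hy)).mono hsub) (hK.mono hsub)
      (fun y hy ↦ bound y (hsub hy)) hgm (left_mem_Icc.mpr hxm)

end Gronwall

section IntegratingFactor

variable {a b : ℝ} {p y y' : ℝ → ℝ}

theorem hasDerivWithinAt_integral_Icc_of_continuousOn (hp : ContinuousOn p (Icc a b)) {x : ℝ}
    (hx : x ∈ Icc a b) : HasDerivWithinAt (fun t ↦ ∫ s in a..t, p s) (p x) (Icc a b) x := by
  have : Fact (x ∈ Icc a b) := ⟨hx⟩
  exact intervalIntegral.integral_hasDerivWithinAt_right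
    ((hp.mono (Icc_subset_Icc_right hx.2)).intervalIntegrable_of_Icc hx.1)
    (hp.stronglyMeasurableAtFilter_nhdsWithin measurableSet_Icc x) (hp x hx)

theorem antitoneOn_mul_exp_integral (hp : ContinuousOn p (Icc a b))
    (hy : ∀ x ∈ Icc a b, HasDerivWithinAt y (y' x) (Icc a b) x)
    (hle : ∀ x ∈ Icc a b, y' x + p x * y x ≤ 0) :
    AntitoneOn (fun x ↦ y x * Real.exp (∫ s in a..x, p s)) (Icc a b) := by
  have deriv_mul_exp : ∀ x ∈ Icc a b,
      HasDerivWithinAt (fun x ↦ y x * Real.exp (∫ s in a..x, p s))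
        ((y' x + p x * y x) * Real.exp (∫ s in a..x, p s)) (Icc a b) x := fun x hx ↦
    ((hy x hx).mul (hasDerivWithinAt_integral_Icc_of_continuousOn hp hx).exp).congr_deriv (by ring)
  refine antitoneOn_of_hasDerivWithinAt_nonpos (convex_Icc a b)
    (fun x hx ↦ (deriv_mul_exp x hx).continuousWithinAt)
    (fun x hx ↦ (deriv_mul_exp x (interior_subset hx)).mono interior_subset)
    (fun x hx ↦ ?_)
  exact mul_nonpos_of_nonpos_of_nonneg (hle x (interior_subset hx)) (Real.exp_pos _).le

theorem eqOn_zero_Icc_of_deriv_add_mul_nonpos (hp : ContinuousOn p (Icc a b))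
    (hy : ∀ x ∈ Icc a b, HasDerivWithinAt y (y' x) (Icc a b) x)
    (hle : ∀ x ∈ Icc a b, y' x + p x * y x ≤ 0) (ha : y a ≤ 0) (hb : 0 ≤ y b) :
    EqOn y 0 (Icc a b) := by
  have anti := antitoneOn_mul_exp_integral hp hy hle
  intro x hx
  have hab : a ≤ b := hx.1.trans hx.2
  apply le_antisymm
  · refine nonpos_of_mul_nonpos_left ?_ (Real.exp_pos (∫ s in a..x, p s))
    exact (anti (left_mem_Icc.mpr hab) hx hx.1).trans
      (mul_nonpos_of_nonpos_of_nonneg ha (Real.exp_pos _).le)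
  · refine nonneg_of_mul_nonneg_left ?_ (Real.exp_pos (∫ s in a..x, p s))
    exact (mul_nonneg hb (Real.exp_pos _).le).trans (anti hx (right_mem_Icc.mpr hab) hx.2)

end IntegratingFactor

/-- `f`, with successive derivatives `f'`, `f''`, `f'''`, solves the similarity equation
`f''' + f f'' - β f'² = 0` on `J`. Derivatives are taken within `J`, hence are one-sided at those
endpoints that belong to `J`. -/
structure IsSimilaritySolutionOn (β : ℝ) (J : Set ℝ) (f f' f'' f''' : ℝ → ℝ) : Prop where
  hasDerivWithinAt : ∀ t ∈ J, HasDerivWithinAt f (f' t) J t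
  hasDerivWithinAt' : ∀ t ∈ J, HasDerivWithinAt f' (f'' t) J t
  hasDerivWithinAt'' : ∀ t ∈ J, HasDerivWithinAt f'' (f''' t) J t
  equation : ∀ t ∈ J, f''' t + f t * f'' t - β * f' t ^ 2 = 0

namespace IsSimilaritySolutionOn

variable {β a b m : ℝ} {J s : Set ℝ} {f f' f'' f''' : ℝ → ℝ}

theorem mono (hf : IsSimilaritySolutionOn β J f f' f'' f''') (hs : s ⊆ J) :
    IsSimilaritySolutionOn β s f f' f'' f''' where
  hasDerivWithinAt t ht := (hf.hasDerivWithinAt t (hs ht)).mono hs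
  hasDerivWithinAt' t ht := (hf.hasDerivWithinAt' t (hs ht)).mono hs
  hasDerivWithinAt'' t ht := (hf.hasDerivWithinAt'' t (hs ht)).mono hs
  equation t ht := hf.equation t (hs ht)

theorem continuousOn (hf : IsSimilaritySolutionOn β J f f' f'' f''') : ContinuousOn f J :=
  fun t ht ↦ (hf.hasDerivWithinAt t ht).continuousWithinAt

theorem continuousOn' (hf : IsSimilaritySolutionOn β J f f' f'' f''') : ContinuousOn f' J :=
  fun t ht ↦ (hf.hasDerivWithinAt' t ht).continuousWithinAt

theorem abs_deriv₃_le (hf : IsSimilaritySolutionOn β J f f' f'' f''') {t : ℝ} (ht : t ∈ J) :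
    |f''' t| ≤ |f t| * |f'' t| + |β * f' t| * |f' t| :=
  calc |f''' t| = |β * f' t * f' t - f t * f'' t| := by
        congr 1
        linear_combination hf.equation t ht
    _ ≤ |β * f' t * f' t| + |f t * f'' t| := abs_sub _ _
    _ = |f t| * |f'' t| + |β * f' t| * |f' t| := by rw [abs_mul (β * f' t), abs_mul (f t), add_comm]

theorem eqOn_const_of_deriv_eq_zero (hf : IsSimilaritySolutionOn β J f f' f'' f''')
    (hJ : J.OrdConnected) (hm : m ∈ J) (hf'm : f' m = 0) (hf''m : f'' m = 0) :
    EqOn f (fun _ ↦ f m) J := by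
  -- Along the given `f` and `f'`, the jet `(f - f m, f', f'')` solves a linear homogeneous system.
  have jet_eq_zero : EqOn (fun t ↦ (f t - f m, f' t, f'' t)) 0 J := by
    refine eqOn_zero_of_norm_deriv_le_of_ordConnected hJ (g' := fun t ↦ (f' t, f'' t, f''' t))
      (K := fun t ↦ 1 + |f t| + |β * f' t|) (fun t ht ↦ ?_) ?_ (fun t ht ↦ ?_) hm
      (by simp only [sub_self, hf'm, hf''m, Prod.mk_zero_zero])
    · exact ((hf.hasDerivWithinAt t ht).sub_const _).prodMk
        ((hf.hasDerivWithinAt' t ht).prodMk (hf.hasDerivWithinAt'' t ht))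
    · exact (continuousOn_const.add hf.continuousOn.abs).add
        (continuousOn_const.mul hf.continuousOn').abs
    · set N := ‖(f t - f m, f' t, f'' t)‖
      have hN : 0 ≤ N := norm_nonneg _
      have hf' : |f' t| ≤ N := (le_max_left _ _).trans (le_max_right _ _)
      have hf'' : |f'' t| ≤ N := (le_max_right _ _).trans (le_max_right _ _)
      have hf''' : |f''' t| ≤ (|f t| + |β * f' t|) * N :=
        calc |f''' t| ≤ |f t| * |f'' t| + |β * f' t| * |f' t| := hf.abs_deriv₃_le ht
          _ ≤ |f t| * N + |β * f' t| * N := by gcongr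
          _ = (|f t| + |β * f' t|) * N := by ring
      have rhs_nonneg : 0 ≤ (|f t| + |β * f' t|) * N := by positivity
      simp only [Prod.norm_mk, Real.norm_eq_abs, max_le_iff]
      refine ⟨?_, ?_, ?_⟩ <;> linarith
  exact fun t ht ↦ sub_eq_zero.mp (congrArg Prod.fst (jet_eq_zero ht))

theorem deriv₂_eqOn_zero_Icc (hf : IsSimilaritySolutionOn β (Icc a b) f f' f'' f''') (hβ : β ≤ 0)
    (ha : f'' a ≤ 0) (hb : 0 ≤ f'' b) : EqOn f'' 0 (Icc a b) := by
  refine eqOn_zero_Icc_of_deriv_add_mul_nonpos hf.continuousOn hf.hasDerivWithinAt''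
    (fun t ht ↦ ?_) ha hb
  calc f''' t + f t * f'' t = β * f' t ^ 2 := sub_eq_zero.mp (hf.equation t ht)
    _ ≤ 0 := mul_nonpos_of_nonpos_of_nonneg hβ (sq_nonneg _)

theorem deriv_eqOn_zero (hf : IsSimilaritySolutionOn β s f f' f'' f''') (hs : UniqueDiffOn ℝ s)
    (hβ : β ≠ 0) (hf'' : EqOn f'' 0 s) : EqOn f' 0 s := by
  intro t ht
  have hf''' : f''' t = 0 := (hs t ht).eq_deriv s (hf.hasDerivWithinAt'' t ht)
    ((hasDerivWithinAt_const t s 0).congr hf'' (hf'' ht))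
  simpa [hf''', hf'' ht, hβ] using hf.equation t ht

end IsSimilaritySolutionOn

theorem stmt_0_general {β : ℝ} (hβ : β < 0) {J : Set ℝ} (hJ : J.OrdConnected)
    {f f' f'' f''' : ℝ → ℝ} (hf : IsSimilaritySolutionOn β J f f' f'' f''')
    (hnc : ¬ ∃ c : ℝ, ∀ t ∈ J, f t = c) {τ : ℝ} (hτ : τ ∈ J) (hττ : f'' τ ≤ 0) :
    ∀ t ∈ J, τ < t → f'' t < 0 := by
  intro t ht hlt
  by_contra! hf''t
  have hf_Icc := hf.mono (hJ.out hτ ht)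
  have hf'' : EqOn f'' 0 (Icc τ t) := hf_Icc.deriv₂_eqOn_zero_Icc hβ.le hττ hf''t
  have hf' : EqOn f' 0 (Icc τ t) := hf_Icc.deriv_eqOn_zero (uniqueDiffOn_Icc hlt) hβ.ne hf''
  have hτ_mem : τ ∈ Icc τ t := left_mem_Icc.mpr hlt.le
  exact hnc ⟨f τ, hf.eqOn_const_of_deriv_eq_zero hJ hτ (hf' hτ_mem) (hf'' hτ_mem)⟩

/-- Lemma 1: Let β < 0 and let f be a non-constant solution of
f''' + f·f'' − β·(f')² = 0 on an interval J.  If f''(τ) ≤ 0 for some τ ∈ J,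
then f''(t) < 0 for every t ∈ J with t > τ. -/
theorem stmt_0 (β : ℝ) (hβ : β < 0) (J : Set ℝ) (hJ : J.OrdConnected)
    (f f' f'' f''' : ℝ → ℝ)
    (hf1 : ∀ t ∈ J, HasDerivAt f (f' t) t)
    (hf2 : ∀ t ∈ J, HasDerivAt f' (f'' t) t)
    (hf3 : ∀ t ∈ J, HasDerivAt f'' (f''' t) t)
    (heq : ∀ t ∈ J, f''' t + f t * f'' t - β * (f' t) ^ 2 = 0)
    (hnc : ¬ ∃ c : ℝ, ∀ t ∈ J, f t = c)
    (τ : ℝ) (hτ : τ ∈ J) (hττ : f'' τ ≤ 0) :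
    ∀ t ∈ J, τ < t → f'' t < 0 :=
  stmt_0_general hβ hJ ⟨fun t ht ↦ (hf1 t ht).hasDerivWithinAt,
    fun t ht ↦ (hf2 t ht).hasDerivWithinAt, fun t ht ↦ (hf3 t ht).hasDerivWithinAt, heq⟩ hnc hτ hττ
end

section
/- Let β < 0 and let f be a non-constant solution of equation (1) on an interval [t₀, ∞) satisfying condition (2). Then there exists t₁ ≥ t₀ such that for all t ≥ t₁ one has f''(t)·f'(t) < 0 and f'''(t)·f''(t) < 0. -/
/-!
Nonconstancy and uniqueness for the linear equation `u'' = (β f') u - f u'` show that `f'` is not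
eventually zero. Put `E = exp (∫ f)`. Then `(f'' E)' = β f'² E` has a constant sign, so `f'' E` is
monotone and `f''` has an eventually constant sign. A function which tends to zero, is not
eventually zero, and has a derivative of eventually constant sign must move strictly towards zero;
for `f'` this gives `f'' f' < 0`. Differentiating the equation,
`(f''' E)' = (2 β - 1) f' f'' E`, which now has a constant sign too, so the sign of `f'''` is
eventually constant. Hence `f''` is monotone, so it tends to zero along with the increments of `f'`,
and the same principle applied to `f''` gives `f''' f'' < 0`.
-/

open Filter Set Topology
open SignType (sign)

section MonotoneOnRay

variable {α β : Type*}

theorem eventuallyConst_atTop_of_monotoneOn_Ici [SemilatticeSup α] [PartialOrder β]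
    [WellFoundedGT β] {f : α → β} {a : α} (hf : MonotoneOn f (Ici a)) :
    EventuallyConst f atTop := by
  have : Nonempty α := ⟨a⟩
  obtain ⟨_, ⟨m, hm, rfl⟩, hmax⟩ := wellFounded_gt.has_min (f '' Ici a) (nonempty_Ici.image f)
  refine eventuallyConst_atTop.2 ⟨m, fun t ht => ?_⟩
  have hta : t ∈ Ici a := le_trans hm ht
  exact ((hf hm hta ht).eq_of_not_lt (hmax _ (mem_image_of_mem f hta))).symm

variable [TopologicalSpace β] [Preorder β] [ClosedIciTopology β] {f : α → β} {a : α} {c : β}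

theorem le_of_tendsto_of_monotoneOn_Ici [Preorder α] [IsDirectedOrder α]
    (hf : MonotoneOn f (Ici a))
    (hlim : Tendsto f atTop (𝓝 c)) {t : α} (ht : t ∈ Ici a) : f t ≤ c :=
  have : Nonempty α := ⟨a⟩
  ge_of_tendsto hlim <| (eventually_ge_atTop t).mono fun _ hs => hf ht (le_trans ht hs) hs

theorem lt_of_tendsto_of_strictMonoOn_Ici [PartialOrder α] [IsDirectedOrder α] [NoMaxOrder α]
    (hf : StrictMonoOn f (Ici a))
    (hlim : Tendsto f atTop (𝓝 c)) {t : α} (ht : t ∈ Ici a) : f t < c := by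
  obtain ⟨s, hts⟩ := exists_gt t
  have hs : s ∈ Ici a := le_trans ht hts.le
  exact (hf ht hs hts).trans_le (le_of_tendsto_of_monotoneOn_Ici hf.monotoneOn hlim hs)

end MonotoneOnRay

section EventualDerivSign

variable {g g' : ℝ → ℝ} {c : ℝ}

theorem exists_monotoneOn_Ici_of_hasDerivAt_nonneg
    (hg : ∀ᶠ t in atTop, HasDerivAt g (g' t) t) (hg' : ∀ᶠ t in atTop, 0 ≤ g' t) :
    ∃ T, MonotoneOn g (Ici T) := by
  obtain ⟨T, hT⟩ := eventually_atTop.1 (hg.and hg')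
  exact ⟨T, monotoneOn_of_hasDerivWithinAt_nonneg (convex_Ici T)
    (fun t ht => (hT t ht).1.continuousAt.continuousWithinAt)
    (fun t ht => (hT t (interior_subset ht)).1.hasDerivWithinAt)
    (fun t ht => (hT t (interior_subset ht)).2)⟩

theorem exists_strictMonoOn_Ici_of_hasDerivAt_pos
    (hg : ∀ᶠ t in atTop, HasDerivAt g (g' t) t) (hg' : ∀ᶠ t in atTop, 0 < g' t) :
    ∃ T, StrictMonoOn g (Ici T) := by
  obtain ⟨T, hT⟩ := eventually_atTop.1 (hg.and hg')
  exact ⟨T, strictMonoOn_of_hasDerivWithinAt_pos (convex_Ici T)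
    (fun t ht => (hT t ht).1.continuousAt.continuousWithinAt)
    (fun t ht => (hT t (interior_subset ht)).1.hasDerivWithinAt)
    (fun t ht => (hT t (interior_subset ht)).2)⟩

theorem eventually_le_of_tendsto_of_hasDerivAt_nonneg
    (hg : ∀ᶠ t in atTop, HasDerivAt g (g' t) t) (hg' : ∀ᶠ t in atTop, 0 ≤ g' t)
    (hlim : Tendsto g atTop (𝓝 c)) : ∀ᶠ t in atTop, g t ≤ c := by
  obtain ⟨T, hmono⟩ := exists_monotoneOn_Ici_of_hasDerivAt_nonneg hg hg'
  exact (eventually_ge_atTop T).mono fun _ ht => le_of_tendsto_of_monotoneOn_Ici hmono hlim ht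

theorem eventually_lt_of_tendsto_of_hasDerivAt_pos
    (hg : ∀ᶠ t in atTop, HasDerivAt g (g' t) t) (hg' : ∀ᶠ t in atTop, 0 < g' t)
    (hlim : Tendsto g atTop (𝓝 c)) : ∀ᶠ t in atTop, g t < c := by
  obtain ⟨T, hmono⟩ := exists_strictMonoOn_Ici_of_hasDerivAt_pos hg hg'
  exact (eventually_ge_atTop T).mono fun _ ht => lt_of_tendsto_of_strictMonoOn_Ici hmono hlim ht

theorem eventually_deriv_mul_self_neg (hg : ∀ᶠ t in atTop, HasDerivAt g (g' t) t)
    (hsign : EventuallyConst (sign ∘ g') atTop) (hlim : Tendsto g atTop (𝓝 0))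
    (hne : ∃ᶠ t in atTop, g t ≠ 0) : ∀ᶠ t in atTop, g' t * g t < 0 := by
  have hg_neg : ∀ᶠ t in atTop, HasDerivAt (-g) (-g' t) t := hg.mono fun _ ht => ht.neg
  have hlim_neg : Tendsto (-g) atTop (𝓝 0) := neg_zero (G := ℝ) ▸ hlim.neg
  obtain ⟨s, hs⟩ := eventuallyConst_iff_exists_eventuallyEq.1 hsign
  rcases s.trichotomy with rfl | rfl | rfl
  · have hg' : ∀ᶠ t in atTop, g' t < 0 := hs.mono fun _ ht => sign_eq_neg_one_iff.1 ht
    filter_upwards [hg', eventually_lt_of_tendsto_of_hasDerivAt_pos hg_neg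
      (hg'.mono fun _ => neg_pos.2) hlim_neg] with t hg't hgt
    exact mul_neg_of_neg_of_pos hg't (neg_lt_zero.1 hgt)
  · have hg' : ∀ᶠ t in atTop, g' t = 0 := hs.mono fun _ ht => sign_eq_zero_iff.1 ht
    have hle := eventually_le_of_tendsto_of_hasDerivAt_nonneg hg
      (hg'.mono fun _ ht => ht.ge) hlim
    have hge := eventually_le_of_tendsto_of_hasDerivAt_nonneg hg_neg
      (hg'.mono fun _ ht => (neg_eq_zero.2 ht).ge) hlim_neg
    obtain ⟨t, hgt, hlet, hget⟩ := (hne.and_eventually (hle.and hge)).exists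
    exact absurd (hlet.antisymm (neg_nonpos.1 hget)) hgt
  · have hg' : ∀ᶠ t in atTop, 0 < g' t := hs.mono fun _ ht => sign_eq_one_iff.1 ht
    filter_upwards [hg', eventually_lt_of_tendsto_of_hasDerivAt_pos hg hg' hlim] with t hg't hgt
    exact mul_neg_of_pos_of_neg hg't hgt

end EventualDerivSign

section LimitOfMonotoneDeriv

variable {u v w : ℝ → ℝ} {c : ℝ}

theorem tendsto_zero_of_monotoneOn_of_hasDerivAt {T : ℝ}
    (hu : ∀ᶠ t in atTop, HasDerivAt u (v t) t) (hv : MonotoneOn v (Ici T))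
    (hlim : Tendsto u atTop (𝓝 c)) : Tendsto v atTop (𝓝 0) := by
  obtain ⟨S, hS⟩ := eventually_atTop.1 hu
  have mean_value : ∀ a ≥ S, ∃ ξ ∈ Ioo a (a + 1), v ξ = u (a + 1) - u a := fun a ha => by
    simpa using exists_hasDerivAt_eq_slope u v (lt_add_one a)
      (fun t ht => (hS t (ha.le.trans ht.1)).continuousAt.continuousWithinAt)
      (fun t ht => hS t (ha.le.trans ht.1.le))
  have lower : ∀ᶠ t in atTop, u t - u (t - 1) ≤ v t := by
    filter_upwards [eventually_ge_atTop (max S T + 1)] with t ht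
    obtain ⟨ξ, hξ, hvξ⟩ := mean_value (t - 1) (by linarith [le_max_left S T])
    rw [sub_add_cancel] at hξ hvξ
    have hξT : T ≤ ξ := by linarith [le_max_right S T, hξ.1]
    exact hvξ ▸ hv hξT (hξT.trans hξ.2.le) hξ.2.le
  have upper : ∀ᶠ t in atTop, v t ≤ u (t + 1) - u t := by
    filter_upwards [eventually_ge_atTop S, eventually_ge_atTop T] with t htS htT
    obtain ⟨ξ, hξ, hvξ⟩ := mean_value t htS
    exact hvξ ▸ hv htT (htT.trans hξ.1.le) hξ.1.le
  have lower_lim : Tendsto (fun t => u t - u (t - 1)) atTop (𝓝 0) := by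
    simpa [← sub_eq_add_neg] using
      hlim.sub (hlim.comp (tendsto_atTop_add_const_right _ (-1) tendsto_id))
  have upper_lim : Tendsto (fun t => u (t + 1) - u t) atTop (𝓝 0) := by
    simpa using (hlim.comp (tendsto_atTop_add_const_right _ 1 tendsto_id)).sub hlim
  exact tendsto_of_tendsto_of_tendsto_of_le_of_le' lower_lim upper_lim lower upper

theorem tendsto_deriv_zero_of_eventuallyConst_sign
    (hu : ∀ᶠ t in atTop, HasDerivAt u (v t) t) (hv : ∀ᶠ t in atTop, HasDerivAt v (w t) t)
    (hw : EventuallyConst (sign ∘ w) atTop) (hlim : Tendsto u atTop (𝓝 c)) :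
    Tendsto v atTop (𝓝 0) := by
  obtain ⟨s, hs⟩ := eventuallyConst_iff_exists_eventuallyEq.1 hw
  rcases le_total 0 s with hs0 | hs0
  · obtain ⟨T, hmono⟩ := exists_monotoneOn_Ici_of_hasDerivAt_nonneg hv
      (hs.mono fun _ ht => sign_nonneg_iff.1 (hs0.trans_eq ht.symm))
    exact tendsto_zero_of_monotoneOn_of_hasDerivAt hu hmono hlim
  · obtain ⟨T, hmono⟩ := exists_monotoneOn_Ici_of_hasDerivAt_nonneg
      (hv.mono fun _ ht => ht.neg)
      (hs.mono fun _ ht => neg_nonneg.2 (sign_nonpos_iff.1 (ht.trans_le hs0)))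
    simpa using (tendsto_zero_of_monotoneOn_of_hasDerivAt
      (hu.mono fun _ ht => ht.neg) hmono hlim.neg).neg

end LimitOfMonotoneDeriv

section IntegratingFactor

variable {p g g' : ℝ → ℝ}

theorem exists_integratingFactor {T : ℝ} (hp : ContinuousOn p (Ici T)) :
    ∃ E : ℝ → ℝ, (∀ t, 0 < E t) ∧ ∀ t ≥ T, HasDerivAt E (p t * E t) t := by
  have hcont : Continuous fun s => p (max T s) :=
    hp.comp_continuous (by fun_prop) fun s => le_max_left T s
  refine ⟨fun t => Real.exp (∫ s in T..t, p (max T s)), fun t => Real.exp_pos _, fun t ht => ?_⟩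
  simpa only [max_eq_right ht, mul_comm] using
    (hcont.integral_hasStrictDerivAt T t).hasDerivAt.exp

theorem eventuallyConst_sign_of_deriv_add_mul_nonneg
    (hp : ∀ᶠ t in atTop, ContinuousAt p t) (hg : ∀ᶠ t in atTop, HasDerivAt g (g' t) t)
    (hnonneg : ∀ᶠ t in atTop, 0 ≤ g' t + p t * g t) : EventuallyConst (sign ∘ g) atTop := by
  obtain ⟨T, hT⟩ := eventually_atTop.1 hp
  obtain ⟨E, hE_pos, hE⟩ :=
    exists_integratingFactor fun t (ht : t ∈ Ici T) => (hT t ht).continuousWithinAt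
  have hgE : ∀ᶠ t in atTop, HasDerivAt (fun t => g t * E t) ((g' t + p t * g t) * E t) t := by
    filter_upwards [hg, eventually_ge_atTop T] with t hgt ht
    exact (hgt.mul (hE t ht)).congr_deriv (by ring)
  obtain ⟨S, hmono⟩ := exists_monotoneOn_Ici_of_hasDerivAt_nonneg hgE
    (hnonneg.mono fun t ht => mul_nonneg ht (hE_pos t).le)
  have hsign : sign ∘ (fun t => g t * E t) = sign ∘ g :=
    funext fun t => by simp [sign_mul, sign_pos (hE_pos t)]
  exact hsign ▸ eventuallyConst_atTop_of_monotoneOn_Ici (sign.monotone.comp_monotoneOn hmono)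

theorem eventuallyConst_sign_of_deriv_add_mul_nonpos
    (hp : ∀ᶠ t in atTop, ContinuousAt p t) (hg : ∀ᶠ t in atTop, HasDerivAt g (g' t) t)
    (hnonpos : ∀ᶠ t in atTop, g' t + p t * g t ≤ 0) : EventuallyConst (sign ∘ g) atTop := by
  have hneg : EventuallyConst (sign ∘ (-g)) atTop :=
    eventuallyConst_sign_of_deriv_add_mul_nonneg hp (hg.mono fun _ ht => ht.neg)
      (hnonpos.mono fun t ht => by simp only [Pi.neg_apply]; linarith)
  have hsign : Neg.neg ∘ sign ∘ (-g) = sign ∘ g :=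
    funext fun t => by simp [Left.sign_neg]
  exact hsign ▸ hneg.comp Neg.neg

theorem eventuallyConst_sign_of_deriv_add_mul_eq_const_mul {k : ℝ} {r : ℝ → ℝ}
    (hp : ∀ᶠ t in atTop, ContinuousAt p t) (hg : ∀ᶠ t in atTop, HasDerivAt g (g' t) t)
    (heq : ∀ᶠ t in atTop, g' t + p t * g t = k * r t) (hr : ∀ᶠ t in atTop, 0 ≤ r t) :
    EventuallyConst (sign ∘ g) atTop := by
  rcases le_total 0 k with hk | hk
  · refine eventuallyConst_sign_of_deriv_add_mul_nonneg hp hg ?_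
    filter_upwards [heq, hr] with t heqt hrt
    exact heqt ▸ mul_nonneg hk hrt
  · refine eventuallyConst_sign_of_deriv_add_mul_nonpos hp hg ?_
    filter_upwards [heq, hr] with t heqt hrt
    exact heqt ▸ mul_nonpos_of_nonpos_of_nonneg hk hrt

end IntegratingFactor

section Uniqueness

theorem eqOn_zero_of_hasDerivAt_clm_apply {E : Type*} [NormedAddCommGroup E] [NormedSpace ℝ E]
    {A : ℝ → E →L[ℝ] E} {x : ℝ → E} {a b : ℝ} (hA : ContinuousOn A (Icc a b))
    (hx : ∀ t ∈ Icc a b, HasDerivAt x (A t (x t)) t) (hb : x b = 0) :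
    EqOn x 0 (Icc a b) := by
  obtain ⟨K, hK⟩ := isCompact_Icc.exists_bound_of_continuousOn hA
  have hlip : ∀ t ∈ Ioc a b, LipschitzOnWith K.toNNReal (A t) univ := fun t ht =>
    ((A t).lipschitz.weaken (by
      rw [← norm_toNNReal]
      exact Real.toNNReal_le_toNNReal (hK t (Ioc_subset_Icc_self ht)))).lipschitzOnWith
  exact ODE_solution_unique_of_mem_Icc_left hlip
    (fun t ht => (hx t ht).continuousAt.continuousWithinAt)
    (fun t ht => (hx t (Ioc_subset_Icc_self ht)).hasDerivWithinAt) (fun _ _ => mem_univ _)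
    continuousOn_const
    (fun t _ => (hasDerivWithinAt_const t (Iic t) (0 : E)).congr_deriv (map_zero (A t)).symm)
    (fun _ _ => mem_univ _) hb

theorem eqOn_zero_of_linear_second_order {p q u v w : ℝ → ℝ} {a b : ℝ}
    (hp : ContinuousOn p (Icc a b)) (hq : ContinuousOn q (Icc a b))
    (hu : ∀ t ∈ Icc a b, HasDerivAt u (v t) t) (hv : ∀ t ∈ Icc a b, HasDerivAt v (w t) t)
    (heq : ∀ t ∈ Icc a b, w t = p t * u t + q t * v t) (hub : u b = 0) (hvb : v b = 0) :
    EqOn u 0 (Icc a b) := by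
  let A : ℝ → ℝ × ℝ →L[ℝ] ℝ × ℝ := fun t =>
    (ContinuousLinearMap.inl ℝ ℝ ℝ).comp (.snd ℝ ℝ ℝ) +
      (ContinuousLinearMap.inr ℝ ℝ ℝ).comp (p t • .fst ℝ ℝ ℝ + q t • .snd ℝ ℝ ℝ)
  have hA : ContinuousOn A (Icc a b) := by fun_prop
  have hx : ∀ t ∈ Icc a b, HasDerivAt (fun t => (u t, v t)) (A t (u t, v t)) t := fun t ht =>
    ((hu t ht).prodMk (hv t ht)).congr_deriv (by simp [A, heq t ht])
  intro t ht
  exact congrArg Prod.fst (eqOn_zero_of_hasDerivAt_clm_apply hA hx (by simp [hub, hvb]) ht)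

end Uniqueness

section Equation

variable {β t₀ : ℝ} {f f' f'' f''' : ℝ → ℝ}

theorem frequently_deriv_ne_zero_of_not_const
    (hf1 : ∀ t ∈ Ici t₀, HasDerivAt f (f' t) t) (hf2 : ∀ t ∈ Ici t₀, HasDerivAt f' (f'' t) t)
    (hf3 : ∀ t ∈ Ici t₀, HasDerivAt f'' (f''' t) t)
    (heq : ∀ t ∈ Ici t₀, f''' t + f t * f'' t - β * (f' t) ^ 2 = 0)
    (hnc : ¬ ∃ c : ℝ, ∀ t ∈ Ici t₀, f t = c) : ∃ᶠ t in atTop, f' t ≠ 0 := by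
  intro hzero
  simp only [not_not] at hzero
  refine hnc ⟨f t₀, fun t ht => ?_⟩
  obtain ⟨S, hS⟩ := eventually_atTop.1 hzero
  obtain ⟨b, hSb, htb⟩ := ((eventually_gt_atTop S).and (eventually_ge_atTop t)).exists
  have hf'_near : f' =ᶠ[𝓝 b] fun _ => 0 := eventually_of_mem (Ici_mem_nhds hSb) hS
  have hf''_b : f'' b = 0 :=
    (hf2 b (ht.trans htb)).unique ((hasDerivAt_const b 0).congr_of_eventuallyEq hf'_near)
  have hf_cont : ContinuousOn f (Icc t₀ b) := fun s hs =>
    (hf1 s hs.1).continuousAt.continuousWithinAt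
  have hf'_cont : ContinuousOn f' (Icc t₀ b) := fun s hs =>
    (hf2 s hs.1).continuousAt.continuousWithinAt
  have hf'_zero : EqOn f' 0 (Icc t₀ b) :=
    eqOn_zero_of_linear_second_order (hf'_cont.const_mul β) hf_cont.neg
      (fun s hs => hf2 s hs.1) (fun s hs => hf3 s hs.1)
      (fun s hs => by simp only [Pi.neg_apply]; linear_combination heq s hs.1)
      hf'_near.self_of_nhds hf''_b
  exact constant_of_has_deriv_right_zero hf_cont
    (fun s hs => ((hf1 s hs.1).congr_deriv (hf'_zero (Ico_subset_Icc_self hs))).hasDerivWithinAt)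
    t ⟨ht, htb⟩

theorem eventually_hasDerivAt_third_deriv
    (hf1 : ∀ t ∈ Ici t₀, HasDerivAt f (f' t) t) (hf2 : ∀ t ∈ Ici t₀, HasDerivAt f' (f'' t) t)
    (hf3 : ∀ t ∈ Ici t₀, HasDerivAt f'' (f''' t) t)
    (heq : ∀ t ∈ Ici t₀, f''' t + f t * f'' t - β * (f' t) ^ 2 = 0) :
    ∀ᶠ t in atTop, HasDerivAt f''' ((2 * β - 1) * (f'' t * f' t) - f t * f''' t) t := by
  filter_upwards [eventually_gt_atTop t₀] with t ht
  have hf'''_eq : f''' =ᶠ[𝓝 t] fun s => β * f' s ^ 2 - f s * f'' s := by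
    filter_upwards [Ici_mem_nhds ht] with s hs
    linear_combination heq s hs
  have hderiv := (((hf2 t ht.le).pow 2).const_mul β).sub ((hf1 t ht.le).mul (hf3 t ht.le))
  refine (hderiv.congr_of_eventuallyEq hf'''_eq).congr_deriv ?_
  push_cast
  ring

end Equation

theorem stmt_1_general (β : ℝ) (t₀ : ℝ)
    (f f' f'' f''' : ℝ → ℝ)
    (hf1 : ∀ t ∈ Ici t₀, HasDerivAt f (f' t) t)
    (hf2 : ∀ t ∈ Ici t₀, HasDerivAt f' (f'' t) t)
    (hf3 : ∀ t ∈ Ici t₀, HasDerivAt f'' (f''' t) t)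
    (heq : ∀ t ∈ Ici t₀, f''' t + f t * f'' t - β * (f' t) ^ 2 = 0)
    (hnc : ¬ ∃ c : ℝ, ∀ t ∈ Ici t₀, f t = c)
    (hlim : Tendsto f' atTop (𝓝 0)) :
    ∃ t₁ ≥ t₀, ∀ t ≥ t₁, f'' t * f' t < 0 ∧ f''' t * f'' t < 0 := by
  have hray : ∀ᶠ t in atTop, t ∈ Ici t₀ := eventually_ge_atTop t₀
  have hf_cont : ∀ᶠ t in atTop, ContinuousAt f t := hray.mono fun t ht => (hf1 t ht).continuousAt
  have hf''_sign : EventuallyConst (sign ∘ f'') atTop :=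
    eventuallyConst_sign_of_deriv_add_mul_eq_const_mul hf_cont (hray.mono hf3)
      (hray.mono fun t ht => sub_eq_zero.1 (heq t ht)) (.of_forall fun t => sq_nonneg (f' t))
  have hf''_mul_f' : ∀ᶠ t in atTop, f'' t * f' t < 0 :=
    eventually_deriv_mul_self_neg (hray.mono hf2) hf''_sign hlim
      (frequently_deriv_ne_zero_of_not_const hf1 hf2 hf3 heq hnc)
  have hf'''_sign : EventuallyConst (sign ∘ f''') atTop :=
    eventuallyConst_sign_of_deriv_add_mul_eq_const_mul (k := 1 - 2 * β) hf_cont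
      (eventually_hasDerivAt_third_deriv hf1 hf2 hf3 heq) (.of_forall fun t => by ring)
      (hf''_mul_f'.mono fun t ht => (neg_pos.2 ht).le)
  have hf''_lim : Tendsto f'' atTop (𝓝 0) :=
    tendsto_deriv_zero_of_eventuallyConst_sign (hray.mono hf2) (hray.mono hf3) hf'''_sign hlim
  have hf'''_mul_f'' : ∀ᶠ t in atTop, f''' t * f'' t < 0 :=
    eventually_deriv_mul_self_neg (hray.mono hf3) hf'''_sign hf''_lim
      (hf''_mul_f'.mono fun t ht => left_ne_zero_of_mul ht.ne).frequently
  obtain ⟨t₁, ht₁⟩ := eventually_atTop.1 (hray.and (hf''_mul_f'.and hf'''_mul_f''))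
  exact ⟨t₁, (ht₁ t₁ le_rfl).1, fun t ht => (ht₁ t ht).2⟩

/-- Lemma 2: Let β < 0 and let f be a non-constant solution of
f''' + f·f'' − β·(f')² = 0 on [t₀, ∞) with f'(t) → 0 as t → ∞.
Then there exists t₁ ≥ t₀ such that f''(t)·f'(t) < 0 and f'''(t)·f''(t) < 0
for all t ≥ t₁. -/
theorem stmt_1 (β : ℝ) (hβ : β < 0) (t₀ : ℝ)
    (f f' f'' f''' : ℝ → ℝ)
    (hf1 : ∀ t ∈ Set.Ici t₀, HasDerivAt f (f' t) t)
    (hf2 : ∀ t ∈ Set.Ici t₀, HasDerivAt f' (f'' t) t)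
    (hf3 : ∀ t ∈ Set.Ici t₀, HasDerivAt f'' (f''' t) t)
    (heq : ∀ t ∈ Set.Ici t₀, f''' t + f t * f'' t - β * (f' t) ^ 2 = 0)
    (hnc : ¬ ∃ c : ℝ, ∀ t ∈ Set.Ici t₀, f t = c)
    (hlim : Filter.Tendsto f' Filter.atTop (nhds 0)) :
    ∃ t₁ ≥ t₀, ∀ t ≥ t₁, f'' t * f' t < 0 ∧ f''' t * f'' t < 0 :=
  stmt_1_general β t₀ f f' f'' f''' hf1 hf2 hf3 heq hnc hlim
end

section
/- Let β < 0 and let f be a non-constant unbounded solution of equation (1) on an interval [t₀, ∞) satisfying condition (2). Then there exists a constant c > 0 such that |f(t)| / t^{1/(1−β)} → c as t → ∞ (i.e. |f(t)| is asymptotically equivalent to c·t^{1/(1−β)} at infinity). -/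
/-!
One of `f` and `-f`, say `h`, is eventually concave and increases to infinity, and it solves
`h''' + σ (h h'' - β h'²) = 0` with `σ = ±1`. The substitution `w = h'' / h'` turns the equation
into a Riccati equation, and barrier arguments give `w = O(h' / h)`. In
`log (h ^ (-β) * h') + w / (σ h)` the terms of the equation that are not integrable cancel: its
derivative is `O(h' / h ^ 3)`, so it converges. Hence `h ^ (-β) * h'` has a positive limit, and so
does `h ^ (1 - β) / t` by integration.
-/

open Filter Set Topology

section HalfLine

variable {a : ℝ}

lemma antitoneOn_Ici_of_hasDerivAt_nonpos {u u' : ℝ → ℝ} (hu : ∀ t ≥ a, HasDerivAt u (u' t) t)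
    (hu' : ∀ t ≥ a, u' t ≤ 0) : AntitoneOn u (Ici a) :=
  antitoneOn_of_hasDerivWithinAt_nonpos (convex_Ici a)
    (fun t ht ↦ (hu t ht).continuousAt.continuousWithinAt)
    (fun t ht ↦ (hu t (interior_subset ht)).hasDerivWithinAt)
    (fun t ht ↦ hu' t (interior_subset ht))

lemma monotoneOn_Ici_of_hasDerivAt_nonneg {u u' : ℝ → ℝ} (hu : ∀ t ≥ a, HasDerivAt u (u' t) t)
    (hu' : ∀ t ≥ a, 0 ≤ u' t) : MonotoneOn u (Ici a) :=
  monotoneOn_of_hasDerivWithinAt_nonneg (convex_Ici a)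
    (fun t ht ↦ (hu t ht).continuousAt.continuousWithinAt)
    (fun t ht ↦ (hu t (interior_subset ht)).hasDerivWithinAt)
    (fun t ht ↦ hu' t (interior_subset ht))

lemma le_of_forall_eq_imp_deriv_pos {u u' : ℝ → ℝ} {c : ℝ}
    (hu : ∀ t ≥ a, HasDerivAt u (u' t) t) (ha : c ≤ u a) (hc : ∀ t ≥ a, u t = c → 0 < u' t)
    {t : ℝ} (ht : a ≤ t) : c ≤ u t :=
  image_le_of_deriv_right_lt_deriv_boundary' (f := fun _ ↦ c) (f' := 0) continuousOn_const
    (fun _ _ ↦ hasDerivWithinAt_const ..) ha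
    (fun s hs ↦ (hu s hs.1).continuousAt.continuousWithinAt)
    (fun s hs ↦ (hu s hs.1).hasDerivWithinAt) (fun s hs hcs ↦ hc s hs.1 hcs.symm)
    (right_mem_Icc.2 ht)

lemma eventually_le_of_forall_le_imp_le_deriv {u u' : ℝ → ℝ} {c δ : ℝ} (hδ : 0 < δ)
    (hu : ∀ t ≥ a, HasDerivAt u (u' t) t) (hc : ∀ t ≥ a, u t ≤ c → δ ≤ u' t) :
    ∀ᶠ t in atTop, c ≤ u t := by
  obtain ⟨b, hb, hcb⟩ : ∃ b ≥ a, c ≤ u b := by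
    by_contra! hlt
    have hmono : MonotoneOn (fun t ↦ u t - δ * t) (Ici a) :=
      monotoneOn_Ici_of_hasDerivAt_nonneg
        (fun t ht ↦ (hu t ht).sub ((hasDerivAt_id t).const_mul δ))
        (fun t ht ↦ by linarith [hc t ht (hlt t ht).le])
    have hpos : 0 ≤ (c - u a) / δ := div_nonneg (by linarith [hlt a le_rfl]) hδ.le
    have hle := hmono self_mem_Ici (mem_Ici.2 (le_add_of_nonneg_right hpos))
      (le_add_of_nonneg_right hpos)
    have hlt' := hlt (a + (c - u a) / δ) (le_add_of_nonneg_right hpos)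
    have hcancel : δ * ((c - u a) / δ) = c - u a := mul_div_cancel₀ _ hδ.ne'
    simp only [mul_add, hcancel] at hle
    linarith
  filter_upwards [eventually_ge_atTop b] with t ht
  exact le_of_forall_eq_imp_deriv_pos (fun s hs ↦ hu s (hb.le.trans hs)) hcb
    (fun s hs hcs ↦ hδ.trans_le (hc s (hb.le.trans hs) hcs.le)) ht

lemma exists_hasDerivAt_of_continuousOn_Ici {F : Type*} [NormedAddCommGroup F] [NormedSpace ℝ F]
    [CompleteSpace F] {g : ℝ → F} (hg : ContinuousOn g (Ici a)) :
    ∃ G : ℝ → F, ∀ t ≥ a, HasDerivAt G (g t) t := by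
  have hcont : Continuous fun t ↦ g (max t a) :=
    hg.comp_continuous (by fun_prop) fun t ↦ le_max_right t a
  refine ⟨fun t ↦ ∫ x in a..t, g (max x a), fun t ht ↦ ?_⟩
  simpa only [max_eq_left ht] using (hcont.integral_hasStrictDerivAt a t).hasDerivAt

lemma nonpos_of_deriv_le_mul {u u' g : ℝ → ℝ} (hg : ContinuousOn g (Ici a))
    (hu : ∀ t ≥ a, HasDerivAt u (u' t) t) (hle : ∀ t ≥ a, u' t ≤ g t * u t) (ha : u a ≤ 0)
    {t : ℝ} (ht : a ≤ t) : u t ≤ 0 := by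
  obtain ⟨G, hG⟩ := exists_hasDerivAt_of_continuousOn_Ici hg
  have hanti : AntitoneOn (fun t ↦ u t * Real.exp (-G t)) (Ici a) :=
    antitoneOn_Ici_of_hasDerivAt_nonpos (u' := fun s ↦ (u' s - g s * u s) * Real.exp (-G s))
      (fun s hs ↦ ((hu s hs).mul (hG s hs).neg.exp).congr_deriv
        (by simp only [Pi.neg_apply]; ring))
      fun s hs ↦ mul_nonpos_of_nonpos_of_nonneg (sub_nonpos.2 (hle s hs)) (Real.exp_pos _).le
  have hprod : u t * Real.exp (-G t) ≤ 0 :=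
    (hanti self_mem_Ici ht ht).trans
      (mul_nonpos_of_nonpos_of_nonneg ha (Real.exp_pos _).le)
  exact nonpos_of_mul_nonpos_left hprod (Real.exp_pos _)

lemma frequently_lt_abs_of_not_bounded {f : ℝ → ℝ} (hf : ContinuousOn f (Ici a))
    (hunb : ¬ ∃ M, ∀ t ∈ Ici a, |f t| ≤ M) (M : ℝ) : ∃ᶠ t in atTop, M < |f t| := by
  by_contra hM
  simp only [not_frequently, not_lt, eventually_atTop] at hM
  obtain ⟨b, hb⟩ := hM
  obtain ⟨M', hM'⟩ := isCompact_Icc.exists_bound_of_continuousOn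
    (hf.mono (Icc_subset_Ici_self (a := b) (b := a)))
  refine hunb ⟨max M M', fun t ht ↦ ?_⟩
  rcases le_total b t with hbt | htb
  · exact (hb t hbt).trans (le_max_left ..)
  · exact (hM' t ⟨ht, htb⟩).trans (le_max_right ..)

lemma tendsto_atTop_of_monotoneOn_of_frequently_lt_abs {f : ℝ → ℝ} (hf : MonotoneOn f (Ici a))
    (hunb : ∀ M, ∃ᶠ t in atTop, M < |f t|) : Tendsto f atTop atTop := by
  refine tendsto_atTop.2 fun M ↦ ?_
  obtain ⟨t, hlt, ht⟩ :=
    ((hunb (max M (-f a))).and_eventually (eventually_ge_atTop a)).exists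
  have hat : f a ≤ f t := hf self_mem_Ici ht ht
  have hMt : M < f t := by
    rcases lt_abs.1 hlt with hlt | hlt
    · exact (le_max_left ..).trans_lt hlt
    · linarith [le_max_right M (-f a)]
  filter_upwards [eventually_ge_atTop t] with s hs
  exact hMt.le.trans (hf ht (ht.trans hs) hs)

end HalfLine

section Limits

variable {F : Type*} [NormedAddCommGroup F] [NormedSpace ℝ F]

lemma exists_tendsto_of_norm_deriv_le [CompleteSpace F] {y y' : ℝ → F} {E E' : ℝ → ℝ} {l : ℝ}
    (hy : ∀ᶠ t in atTop, HasDerivAt y (y' t) t) (hE : ∀ᶠ t in atTop, HasDerivAt E (E' t) t)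
    (hle : ∀ᶠ t in atTop, ‖y' t‖ ≤ E' t) (hlim : Tendsto E atTop (𝓝 l)) :
    ∃ L, Tendsto y atTop (𝓝 L) := by
  obtain ⟨a, ha⟩ := eventually_atTop.1 (hy.and (hE.and hle))
  have hE' : MeasureTheory.IntegrableOn E' (Ioi a) :=
    MeasureTheory.integrableOn_Ioi_deriv_of_nonneg' (fun t ht ↦ (ha t ht).2.1)
      (fun t ht ↦ (norm_nonneg _).trans (ha t (le_of_lt ht)).2.2) hlim
  have hderiv : EqOn (deriv y) y' (Ioi a) := fun t ht ↦ (ha t (le_of_lt ht)).1.deriv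
  have hmeas : MeasureTheory.AEStronglyMeasurable y' (MeasureTheory.volume.restrict (Ioi a)) :=
    (aestronglyMeasurable_deriv y _).congr
      (MeasureTheory.ae_restrict_of_forall_mem measurableSet_Ioi hderiv)
  have hy' : MeasureTheory.IntegrableOn y' (Ioi a) :=
    hE'.mono' hmeas <| MeasureTheory.ae_restrict_of_forall_mem measurableSet_Ioi
      fun t ht ↦ (ha t (le_of_lt ht)).2.2
  exact ⟨_, MeasureTheory.tendsto_limUnder_of_hasDerivAt_of_integrableOn_Ioi
    (fun t ht ↦ (ha t (le_of_lt ht)).1) hy'⟩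

lemma isLittleO_id_of_tendsto_deriv_zero {y y' : ℝ → F}
    (hy : ∀ᶠ t in atTop, HasDerivAt y (y' t) t) (hlim : Tendsto y' atTop (𝓝 0)) :
    y =o[atTop] (id : ℝ → ℝ) := by
  refine Asymptotics.isLittleO_iff.2 fun c hc ↦ ?_
  obtain ⟨a, ha⟩ := eventually_atTop.1
    (hy.and (((tendsto_zero_iff_norm_tendsto_zero.1 hlim).eventually_le_const (half_pos hc)).and
      (eventually_ge_atTop 0)))
  have hconst : ∀ᶠ t : ℝ in atTop, ‖y a‖ ≤ c / 2 * t :=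
    (tendsto_id.const_mul_atTop (half_pos hc)).eventually_ge_atTop _
  filter_upwards [eventually_ge_atTop a, hconst] with t hat ht
  have ha0 : 0 ≤ a := (ha a le_rfl).2.2
  have hmean : ‖y t - y a‖ ≤ c / 2 * ‖t - a‖ :=
    (convex_Ici a).norm_image_sub_le_of_norm_hasDerivWithin_le
      (fun s hs ↦ (ha s hs).1.hasDerivWithinAt) (fun s hs ↦ (ha s hs).2.1) self_mem_Ici hat
  rw [Real.norm_of_nonneg (sub_nonneg.2 hat)] at hmean
  rw [id, Real.norm_of_nonneg (ha0.trans hat)]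
  linarith [norm_le_norm_add_norm_sub' (y t) (y a), mul_nonneg (half_pos hc).le ha0]

lemma tendsto_inv_smul_of_tendsto_deriv {y y' : ℝ → F} {L : F}
    (hy : ∀ᶠ t in atTop, HasDerivAt y (y' t) t) (hlim : Tendsto y' atTop (𝓝 L)) :
    Tendsto (fun t ↦ t⁻¹ • y t) atTop (𝓝 L) := by
  have hsub : (fun t ↦ y t - t • L) =o[atTop] (id : ℝ → ℝ) :=
    isLittleO_id_of_tendsto_deriv_zero (y' := fun t ↦ y' t - L)
      (hy.mono fun t ht ↦
        (ht.sub ((hasDerivAt_id t).smul_const L)).congr_deriv (by rw [one_smul]))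
      (by simpa using hlim.sub_const L)
  have hzero : Tendsto (fun t : ℝ ↦ t⁻¹ • (y t - t • L)) atTop (𝓝 0) :=
    hsub.tendsto_inv_smul_nhds_zero
  refine (by simpa using hzero.add_const L : Tendsto _ _ (𝓝 L)).congr' ?_
  filter_upwards [eventually_ne_atTop 0] with t ht
  rw [smul_sub, inv_smul_smul₀ ht, sub_add_cancel]

end Limits

/-- `h` solves `h''' + σ (h h'' - β h'²) = 0` on `[T, ∞)`, where `h'` and `h''` are its first two
derivatives, and it increases concavely to infinity with slope tending to zero. The coefficient
`σ = 1` gives the equation of the theorem, and `σ = -1` the equation satisfied by `-f`. -/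
structure GrowingSolution (σ β T : ℝ) (h h' h'' : ℝ → ℝ) : Prop where
  hasDerivAt : ∀ t ≥ T, HasDerivAt h (h' t) t
  hasDerivAt_slope : ∀ t ≥ T, HasDerivAt h' (h'' t) t
  hasDerivAt_curvature :
    ∀ t ≥ T, HasDerivAt h'' (-(σ * (h t * h'' t - β * h' t ^ 2))) t
  slope_pos : ∀ t ≥ T, 0 < h' t
  curvature_nonpos : ∀ t ≥ T, h'' t ≤ 0
  tendsto_atTop : Tendsto h atTop atTop
  tendsto_slope : Tendsto h' atTop (𝓝 0)

namespace GrowingSolution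

variable {σ β T : ℝ} {h h' h'' : ℝ → ℝ}

lemma of_curvature_nonpos (hh : ∀ t ≥ T, HasDerivAt h (h' t) t)
    (hh' : ∀ t ≥ T, HasDerivAt h' (h'' t) t)
    (hh'' : ∀ t ≥ T, HasDerivAt h'' (-(σ * (h t * h'' t - β * h' t ^ 2))) t)
    (hnonpos : ∀ t ≥ T, h'' t ≤ 0) (hlim : Tendsto h' atTop (𝓝 0))
    (hunb : ∀ M, ∃ᶠ t in atTop, M < |h t|) : GrowingSolution σ β T h h' h'' := by
  have hanti : AntitoneOn h' (Ici T) := antitoneOn_Ici_of_hasDerivAt_nonpos hh' hnonpos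
  have hnonneg : ∀ t ≥ T, 0 ≤ h' t := fun t ht ↦ le_of_tendsto hlim <| by
    filter_upwards [eventually_ge_atTop t] with s hs using hanti ht (ht.le.trans hs) hs
  have htop : Tendsto h atTop atTop :=
    tendsto_atTop_of_monotoneOn_of_frequently_lt_abs
      (monotoneOn_Ici_of_hasDerivAt_nonneg hh hnonneg) hunb
  refine ⟨hh, hh', hh'', fun t ht ↦ ?_, hnonpos, htop, hlim⟩
  by_contra! hle
  have hconst : AntitoneOn h (Ici t) :=
    antitoneOn_Ici_of_hasDerivAt_nonpos (fun s hs ↦ hh s (ht.le.trans hs))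
      fun s hs ↦ (hanti ht (ht.le.trans hs) hs).trans hle
  obtain ⟨s, hlt, hs⟩ := ((htop.eventually_gt_atTop (h t)).and (eventually_ge_atTop t)).exists
  exact hlt.not_ge (hconst self_mem_Ici hs hs)

lemma monotoneOn (S : GrowingSolution σ β T h h' h'') : MonotoneOn h (Ici T) :=
  monotoneOn_Ici_of_hasDerivAt_nonneg S.hasDerivAt fun t ht ↦ (S.slope_pos t ht).le

lemma antitoneOn_slope (S : GrowingSolution σ β T h h' h'') : AntitoneOn h' (Ici T) :=
  antitoneOn_Ici_of_hasDerivAt_nonpos S.hasDerivAt_slope S.curvature_nonpos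

lemma curvature_div_slope_nonpos (S : GrowingSolution σ β T h h' h'') {t : ℝ} (ht : T ≤ t) :
    h'' t / h' t ≤ 0 :=
  div_nonpos_of_nonpos_of_nonneg (S.curvature_nonpos t ht) (S.slope_pos t ht).le

lemma hasDerivAt_curvature_div_slope (S : GrowingSolution σ β T h h' h'') {t : ℝ} (ht : T ≤ t) :
    HasDerivAt (fun t ↦ h'' t / h' t)
      (-(σ * (h t * (h'' t / h' t) - β * h' t)) - (h'' t / h' t) ^ 2) t := by
  have hpos := S.slope_pos t ht
  refine ((S.hasDerivAt_curvature t ht).div (S.hasDerivAt_slope t ht) hpos.ne').congr_deriv ?_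
  field_simp

lemma frequently_neg_lt_curvature_div_slope (S : GrowingSolution σ β T h h' h'') {δ : ℝ}
    (hδ : 0 < δ) :
    ∃ᶠ t in atTop, -δ < h'' t / h' t := by
  by_contra hfreq
  simp only [not_frequently, not_lt] at hfreq
  obtain ⟨a, ha⟩ := eventually_atTop.1 (hfreq.and (eventually_ge_atTop T))
  have hT : ∀ t ≥ a, T ≤ t := fun t ht ↦ (ha t ht).2
  have hanti : AntitoneOn (fun t ↦ h' t + δ * h t) (Ici a) :=
    antitoneOn_Ici_of_hasDerivAt_nonpos
      (fun t ht ↦ (S.hasDerivAt_slope t (hT t ht)).add ((S.hasDerivAt t (hT t ht)).const_mul δ))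
      fun t ht ↦ by linarith [(div_le_iff₀ (S.slope_pos t (hT t ht))).1 (ha t ht).1]
  obtain ⟨t, hlt, ht⟩ := (((S.tendsto_atTop.const_mul_atTop hδ).eventually_gt_atTop
    (h' a + δ * h a)).and (eventually_ge_atTop a)).exists
  have hle : h' t + δ * h t ≤ h' a + δ * h a := hanti self_mem_Ici ht ht
  linarith [S.slope_pos t (hT t ht)]

/- Once below `β h' / h`, the quotient `h'' / h'` would stay below a negative constant, which would
bound `h`. -/
lemma le_curvature_div_slope_of_nonpos (S : GrowingSolution σ β T h h' h'') (hβ : β < 0)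
    (hσ : σ ≤ 0) {t : ℝ} (ht : T ≤ t) (hpos : 0 < h t) : β * (h' t / h t) ≤ h'' t / h' t := by
  by_contra! hlt
  set δ : ℝ := -(β * (h' t / h t)) with hδ
  have hδ0 : 0 < δ :=
    neg_pos.2 (mul_neg_of_neg_of_pos hβ (div_pos (S.slope_pos t ht) hpos))
  have hδh : δ * h t = -(β * h' t) := by rw [hδ]; field_simp
  have hbarrier : ∀ s ≥ t, δ ≤ -(h'' s / h' s) := fun s hs ↦
    le_of_forall_eq_imp_deriv_pos (u := fun s ↦ -(h'' s / h' s))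
      (fun r hr ↦ (S.hasDerivAt_curvature_div_slope (ht.trans hr)).neg) (by linarith)
      (fun r hr hw ↦ by
        have hmono : δ * h t ≤ δ * h r :=
          mul_le_mul_of_nonneg_left (S.monotoneOn ht (ht.trans hr) hr) hδ0.le
        have hanti : -β * h' r ≤ -β * h' t :=
          mul_le_mul_of_nonneg_left (S.antitoneOn_slope ht (ht.trans hr) hr) (by linarith)
        rw [show h'' r / h' r = -δ by linarith]
        nlinarith [mul_nonneg (neg_nonneg.2 hσ) (show 0 ≤ δ * h r + β * h' r by linarith)])
      hs
  obtain ⟨s, hlt', hs⟩ :=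
    ((S.frequently_neg_lt_curvature_div_slope hδ0).and_eventually (eventually_ge_atTop t)).exists
  linarith [hbarrier s hs]

lemma eventually_neg_le_curvature_div_slope_of_pos (S : GrowingSolution σ β T h h' h'')
    (hσ : 0 < σ) :
    ∀ᶠ t in atTop, -(σ * h t / 4) ≤ h'' t / h' t := by
  have hlim : Tendsto (fun t ↦ (-β - 1 / 4) * h' t) atTop (𝓝 0) := by
    simpa using S.tendsto_slope.const_mul (-β - 1 / 4)
  obtain ⟨a, ha⟩ := eventually_atTop.1 ((eventually_ge_atTop T).and
    ((S.tendsto_atTop.eventually_ge_atTop (4 / σ)).and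
      ((S.tendsto_atTop.eventually_ge_atTop 1).and
        (hlim.eventually_lt_const (show 0 < 3 * σ / 16 by positivity)))))
  obtain ⟨b, hwb, hb⟩ :=
    ((S.frequently_neg_lt_curvature_div_slope one_pos).and_eventually
      (eventually_ge_atTop a)).exists
  have hstart : 1 ≤ σ * h b / 4 := by
    linarith [(div_le_iff₀ hσ).1 (ha b hb).2.1]
  filter_upwards [eventually_ge_atTop b] with t ht
  have hbarrier : 0 ≤ h'' t / h' t + σ * h t / 4 :=
    le_of_forall_eq_imp_deriv_pos (u := fun t ↦ h'' t / h' t + σ * h t / 4)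
      (fun s hs ↦ (S.hasDerivAt_curvature_div_slope (ha s (hb.trans hs)).1).add
        (((S.hasDerivAt s (ha s (hb.trans hs)).1).const_mul σ).div_const 4))
      (by linarith)
      (fun s hs hw ↦ by
        obtain ⟨-, -, hh, hh'⟩ := ha s (hb.trans hs)
        rw [show h'' s / h' s = -(σ * h s / 4) by linarith]
        have hsq : 1 ≤ h s ^ 2 := one_le_pow₀ hh
        nlinarith [mul_pos hσ (show 0 < 3 * σ / 16 * h s ^ 2 - (-β - 1 / 4) * h' s by nlinarith)])
      ht
  linarith

lemma hasDerivAt_mul_curvature_div_slope_sq (S : GrowingSolution σ β T h h' h'') {t : ℝ}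
    (ht : T ≤ t) :
    HasDerivAt (fun t ↦ h t * (h'' t / h' t) / h' t)
      (h'' t / h' t - σ * h t * (h t * (h'' t / h' t) / h' t - β) -
        2 * (h t * (h'' t / h' t) / h' t) * (h'' t / h' t)) t := by
  have hpos := S.slope_pos t ht
  refine (((S.hasDerivAt t ht).mul (S.hasDerivAt_curvature_div_slope ht)).div
    (S.hasDerivAt_slope t ht) hpos.ne').congr_deriv ?_
  simp only [Pi.mul_apply]
  field_simp
  ring

/- Here `h'' h / h'²` grows at a definite rate as long as it is below `2β - 1`. -/
lemma eventually_le_curvature_div_slope_of_pos (S : GrowingSolution σ β T h h' h'') (hβ : β < 0)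
    (hσ : 0 < σ) : ∀ᶠ t in atTop, (2 * β - 1) * (h' t / h t) ≤ h'' t / h' t := by
  obtain ⟨a, ha⟩ := eventually_atTop.1 ((eventually_ge_atTop T).and
    ((S.eventually_neg_le_curvature_div_slope_of_pos hσ).and
      (S.tendsto_atTop.eventually_ge_atTop 1)))
  have hevent : ∀ᶠ t in atTop, 2 * β - 1 ≤ h t * (h'' t / h' t) / h' t :=
    eventually_le_of_forall_le_imp_le_deriv (show 0 < σ / 4 by positivity)
      (fun t ht ↦ S.hasDerivAt_mul_curvature_div_slope_sq (ha t ht).1)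
      (fun t ht hv ↦ by
        obtain ⟨-, hw, hh⟩ := ha t ht
        set v := h t * (h'' t / h' t) / h' t
        have hquad : -v * (-(h'' t / h' t)) ≤ -v * (σ * h t / 4) :=
          mul_le_mul_of_nonneg_left (by linarith) (by linarith)
        have hσh : σ ≤ σ * h t := le_mul_of_one_le_right hσ.le hh
        have hlin : σ * h t * (1 - 2 * β) ≤ σ * h t * -v :=
          mul_le_mul_of_nonneg_left (by linarith) (by linarith)
        linarith)
  filter_upwards [hevent, eventually_ge_atTop a] with t hv ht
  obtain ⟨hT, -, hh⟩ := ha t ht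
  rw [le_div_iff₀ (S.slope_pos t hT)] at hv
  rw [← mul_div_assoc, div_le_iff₀ (by linarith)]
  linarith

lemma exists_eventually_abs_curvature_div_slope_le (S : GrowingSolution σ β T h h' h'') (hβ : β < 0)
    (hσ : σ ≠ 0) : ∃ K > 0, ∀ᶠ t in atTop, |h'' t / h' t| ≤ K * (h' t / h t) := by
  rcases hσ.lt_or_gt with hneg | hpos
  · refine ⟨-β, neg_pos.2 hβ, ?_⟩
    filter_upwards [eventually_ge_atTop T, S.tendsto_atTop.eventually_gt_atTop 0] with t ht hh
    rw [abs_of_nonpos (S.curvature_div_slope_nonpos ht)]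
    linarith [S.le_curvature_div_slope_of_nonpos hβ hneg.le ht hh]
  · refine ⟨1 - 2 * β, by linarith, ?_⟩
    filter_upwards [eventually_ge_atTop T,
      S.eventually_le_curvature_div_slope_of_pos hβ hpos] with t ht hw
    rw [abs_of_nonpos (S.curvature_div_slope_nonpos ht)]
    linarith

lemma hasDerivAt_corrected_log (S : GrowingSolution σ β T h h' h'') (hσ : σ ≠ 0) {t : ℝ}
    (ht : T ≤ t) (hpos : 0 < h t) :
    HasDerivAt (fun t ↦ -β * Real.log (h t) + Real.log (h' t) + h'' t / h' t / (σ * h t))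
      (-((h'' t / h' t) ^ 2 / h t + h'' t / h' t * h' t / h t ^ 2) / σ) t := by
  have hslope := S.slope_pos t ht
  have hh := S.hasDerivAt t ht
  refine ((((hh.log hpos.ne').const_mul (-β)).add
    ((S.hasDerivAt_slope t ht).log hslope.ne')).add
      ((S.hasDerivAt_curvature_div_slope ht).div (hh.const_mul σ) (by positivity))).congr_deriv ?_
  field_simp
  ring

lemma tendsto_inv_sq (S : GrowingSolution σ β T h h' h'') :
    Tendsto (fun t ↦ (h t ^ 2)⁻¹) atTop (𝓝 0) :=
  ((tendsto_pow_atTop two_ne_zero).comp S.tendsto_atTop).inv_tendsto_atTop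

lemma exists_tendsto_corrected_log (S : GrowingSolution σ β T h h' h'') (hβ : β < 0)
    (hσ : σ ≠ 0) :
    ∃ l, Tendsto (fun t ↦ -β * Real.log (h t) + Real.log (h' t) + h'' t / h' t / (σ * h t))
      atTop (𝓝 l) := by
  obtain ⟨K, hK, hw⟩ := S.exists_eventually_abs_curvature_div_slope_le hβ hσ
  set C : ℝ := (K ^ 2 + K) / |σ| with hC
  refine exists_tendsto_of_norm_deriv_le (E := fun t ↦ -(C / 2) * (h t ^ 2)⁻¹)
    (E' := fun t ↦ C * h' t / h t ^ 3) (l := -(C / 2) * 0)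
    (y' := fun t ↦ -((h'' t / h' t) ^ 2 / h t + h'' t / h' t * h' t / h t ^ 2) / σ) ?_ ?_ ?_
    (S.tendsto_inv_sq.const_mul _)
  · filter_upwards [eventually_ge_atTop T, S.tendsto_atTop.eventually_gt_atTop 0] with t ht hpos
    exact S.hasDerivAt_corrected_log hσ ht hpos
  · filter_upwards [eventually_ge_atTop T, S.tendsto_atTop.eventually_gt_atTop 0] with t ht hpos
    refine ((((S.hasDerivAt t ht).pow 2).inv (pow_pos hpos 2).ne').const_mul
      (-(C / 2))).congr_deriv ?_
    simp only [Pi.pow_apply]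
    field_simp
    norm_num
    ring
  · filter_upwards [eventually_ge_atTop T, S.tendsto_atTop.eventually_gt_atTop 0, hw,
      S.tendsto_slope.eventually_le_const one_pos] with t ht hpos hwt hle
    have hslope := S.slope_pos t ht
    rw [norm_div, norm_neg, Real.norm_eq_abs, Real.norm_eq_abs]
    calc |(h'' t / h' t) ^ 2 / h t + h'' t / h' t * h' t / h t ^ 2| / |σ|
        ≤ (|h'' t / h' t| ^ 2 / h t + |h'' t / h' t| * h' t / h t ^ 2) / |σ| := by
          gcongr
          refine (abs_add_le _ _).trans_eq ?_
          rw [abs_div, abs_div, abs_mul, abs_pow, abs_of_pos hpos, abs_of_pos hslope,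
            abs_of_pos (pow_pos hpos 2)]
      _ ≤ ((K * (h' t / h t)) ^ 2 / h t + K * (h' t / h t) * h' t / h t ^ 2) / |σ| := by gcongr
      _ = C * (h' t * h' t) / h t ^ 3 := by rw [hC]; field_simp
      _ ≤ C * (h' t * 1) / h t ^ 3 := by gcongr
      _ = C * h' t / h t ^ 3 := by rw [mul_one]

lemma tendsto_curvature_div_slope_div (S : GrowingSolution σ β T h h' h'') (hβ : β < 0)
    (hσ : σ ≠ 0) :
    Tendsto (fun t ↦ h'' t / h' t / (σ * h t)) atTop (𝓝 0) := by
  obtain ⟨K, -, hw⟩ := S.exists_eventually_abs_curvature_div_slope_le hβ hσ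
  refine squeeze_zero_norm' (a := fun t ↦ K / |σ| * (h' t * (h t ^ 2)⁻¹)) ?_
    (by simpa using (S.tendsto_slope.mul S.tendsto_inv_sq).const_mul (K / |σ|))
  filter_upwards [S.tendsto_atTop.eventually_gt_atTop 0, hw] with t hpos hwt
  rw [norm_div, norm_mul, Real.norm_eq_abs, Real.norm_eq_abs, Real.norm_of_nonneg hpos.le]
  calc |h'' t / h' t| / (|σ| * h t) ≤ K * (h' t / h t) / (|σ| * h t) := by gcongr
    _ = K / |σ| * (h' t * (h t ^ 2)⁻¹) := by field_simp

lemma exists_tendsto_rpow_mul_slope (S : GrowingSolution σ β T h h' h'') (hβ : β < 0)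
    (hσ : σ ≠ 0) : ∃ L > 0, Tendsto (fun t ↦ h t ^ (-β) * h' t) atTop (𝓝 L) := by
  obtain ⟨l, hl⟩ := S.exists_tendsto_corrected_log hβ hσ
  have hlog : Tendsto (fun t ↦ -β * Real.log (h t) + Real.log (h' t)) atTop (𝓝 l) := by
    simpa using hl.sub (S.tendsto_curvature_div_slope_div hβ hσ)
  refine ⟨Real.exp l, Real.exp_pos l, (hlog.rexp).congr' ?_⟩
  filter_upwards [eventually_ge_atTop T, S.tendsto_atTop.eventually_gt_atTop 0] with t ht hpos
  rw [Real.exp_add, Real.exp_log (S.slope_pos t ht), mul_comm (-β), Real.rpow_def_of_pos hpos]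

lemma exists_tendsto_abs_div_rpow (S : GrowingSolution σ β T h h' h'') (hβ : β < 0)
    (hσ : σ ≠ 0) :
    ∃ c > 0, Tendsto (fun t ↦ |h t| / t ^ (1 / (1 - β))) atTop (𝓝 c) := by
  obtain ⟨L, hL, hlim⟩ := S.exists_tendsto_rpow_mul_slope hβ hσ
  have hβ' : 0 < 1 - β := by linarith
  have hderiv : ∀ᶠ t in atTop,
      HasDerivAt (fun t ↦ h t ^ (1 - β)) ((1 - β) * (h t ^ (-β) * h' t)) t := by
    filter_upwards [eventually_ge_atTop T, S.tendsto_atTop.eventually_gt_atTop 0] with t ht hpos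
    convert (S.hasDerivAt t ht).rpow_const (p := 1 - β) (Or.inl hpos.ne') using 1
    rw [sub_sub_cancel_left]
    ring
  have hmean := tendsto_inv_smul_of_tendsto_deriv hderiv (hlim.const_mul (1 - β))
  have hLpos : 0 < (1 - β) * L := mul_pos hβ' hL
  refine ⟨((1 - β) * L) ^ (1 / (1 - β)), by positivity,
    (hmean.rpow_const (Or.inl hLpos.ne')).congr' ?_⟩
  filter_upwards [S.tendsto_atTop.eventually_gt_atTop 0, eventually_gt_atTop 0] with t hpos ht
  rw [smul_eq_mul, inv_mul_eq_div, Real.div_rpow (by positivity) ht.le, ← Real.rpow_mul hpos.le,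
    mul_one_div_cancel hβ'.ne', Real.rpow_one, abs_of_pos hpos]

end GrowingSolution

lemma exists_growingSolution_or_neg {β t₀ : ℝ} (hβ : β ≤ 0) {f f' f'' : ℝ → ℝ}
    (hf : ∀ t ≥ t₀, HasDerivAt f (f' t) t) (hf' : ∀ t ≥ t₀, HasDerivAt f' (f'' t) t)
    (hf'' : ∀ t ≥ t₀, HasDerivAt f'' (-(f t * f'' t - β * f' t ^ 2)) t)
    (hunb : ¬ ∃ M, ∀ t ∈ Ici t₀, |f t| ≤ M) (hlim : Tendsto f' atTop (𝓝 0)) :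
    (∃ T, GrowingSolution 1 β T f f' f'') ∨ GrowingSolution (-1) β t₀ (-f) (-f') (-f'') := by
  have hcont : ContinuousOn f (Ici t₀) := fun t ht ↦ (hf t ht).continuousAt.continuousWithinAt
  have hfreq : ∀ M, ∃ᶠ t in atTop, M < |f t| := frequently_lt_abs_of_not_bounded hcont hunb
  by_cases hex : ∃ T ≥ t₀, f'' T ≤ 0
  · obtain ⟨T, hT, hfT⟩ := hex
    -- `f'' * exp (∫ f)` is antitone, so `f''` remains nonpositive.
    have hnonpos : ∀ t ≥ T, f'' t ≤ 0 := fun t ht ↦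
      nonpos_of_deriv_le_mul (g := -f) (hcont.mono (Ici_subset_Ici.2 hT)).neg
        (fun s hs ↦ hf'' s (hT.le.trans hs))
        (fun s _ ↦ by simp only [Pi.neg_apply]; nlinarith [sq_nonneg (f' s)]) hfT ht
    exact .inl ⟨T, .of_curvature_nonpos (fun t ht ↦ hf t (hT.le.trans ht))
      (fun t ht ↦ hf' t (hT.le.trans ht))
      (fun t ht ↦ by simpa only [one_mul] using hf'' t (hT.le.trans ht)) hnonpos hlim hfreq⟩
  · push Not at hex
    refine .inr (.of_curvature_nonpos (fun t ht ↦ (hf t ht).neg) (fun t ht ↦ (hf' t ht).neg)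
      (fun t ht ↦ ?_) (fun t ht ↦ neg_nonpos.2 (hex t ht).le) (by simpa using! hlim.neg)
      (by simpa using hfreq))
    refine (hf'' t ht).neg.congr_deriv ?_
    simp only [Pi.neg_apply]
    ring

/-- Theorem 3: Let β < 0 and let f be a non-constant unbounded solution of
f''' + f·f'' − β·(f')² = 0 on [t₀, ∞) with f'(t) → 0 as t → ∞.
Then there exists c > 0 such that |f(t)| ∼ c·t^{1/(1−β)} as t → ∞. -/
theorem stmt_2 (β : ℝ) (hβ : β < 0) (t₀ : ℝ)
    (f f' f'' f''' : ℝ → ℝ)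
    (hf1 : ∀ t ∈ Set.Ici t₀, HasDerivAt f (f' t) t)
    (hf2 : ∀ t ∈ Set.Ici t₀, HasDerivAt f' (f'' t) t)
    (hf3 : ∀ t ∈ Set.Ici t₀, HasDerivAt f'' (f''' t) t)
    (heq : ∀ t ∈ Set.Ici t₀, f''' t + f t * f'' t - β * (f' t) ^ 2 = 0)
    (hnc : ¬ ∃ c : ℝ, ∀ t ∈ Set.Ici t₀, f t = c)
    (hunb : ¬ ∃ M : ℝ, ∀ t ∈ Set.Ici t₀, |f t| ≤ M)
    (hlim : Filter.Tendsto f' Filter.atTop (nhds 0)) :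
    ∃ c > 0, Filter.Tendsto (fun t => |f t| / t ^ (1 / (1 - β)))
      Filter.atTop (nhds c) := by
  have hf3' : ∀ t ≥ t₀, HasDerivAt f'' (-(f t * f'' t - β * f' t ^ 2)) t := fun t ht ↦
    (hf3 t ht).congr_deriv (by linarith [heq t ht])
  rcases exists_growingSolution_or_neg hβ.le hf1 hf2 hf3' hunb hlim with ⟨T, S⟩ | S
  · exact S.exists_tendsto_abs_div_rpow hβ one_ne_zero
  · simpa only [Pi.neg_apply, abs_neg] using
      S.exists_tendsto_abs_div_rpow hβ (neg_ne_zero.2 one_ne_zero)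
end

section
/- Let β < 0 and let f be a non-constant solution of equation (1) on [t₀, ∞) satisfying condition (2). Then f''(t) → 0 as t → ∞. -/
/-!
Writing the equation as `f''' = β f'² - f f''` and differentiating once more,
`(f'')' + f f'' = β f'²` and `(f''')' + f f''' = (2β - 1) f' f''`.
A solution of `y' + p y = q` has a constant sign near `∞` as soon as `q` has, because
`(y exp ∫p)' = q exp ∫p`. Hence `f''` has a constant sign near `∞`, then so does `f'`, then `f'''`.
So `f''` is monotone near `∞`, and is squeezed between the increments `f' t - f' (t - 1)` and
`f' (t + 1) - f' t`, which tend to `0` when `f'` converges.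
-/

open Filter Set Topology

/-- A real function has an eventual sign if near `+∞` it is everywhere nonnegative or everywhere
nonpositive. The inequalities are weak, so a function that vanishes near `+∞` qualifies. -/
def HasEventualSign (g : ℝ → ℝ) : Prop :=
  (∀ᶠ t in atTop, 0 ≤ g t) ∨ ∀ᶠ t in atTop, g t ≤ 0

theorem exists_eventually_hasDerivAt_of_eventually_continuousAt {p : ℝ → ℝ}
    (hp : ∀ᶠ t in atTop, ContinuousAt p t) :
    ∃ P : ℝ → ℝ, ∀ᶠ t in atTop, HasDerivAt P (p t) t := by
  obtain ⟨a, ha⟩ := eventually_atTop.mp hp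
  have hcont : ContinuousOn p (Ici a) := fun t ht => (ha t ht).continuousWithinAt
  refine ⟨fun t => ∫ s in a..t, p s, ?_⟩
  filter_upwards [eventually_gt_atTop a] with t hat
  refine intervalIntegral.integral_hasDerivAt_right ?_ ?_ (ha t hat.le)
  · exact (hcont.mono (uIcc_of_le hat.le ▸ Icc_subset_Ici_self)).intervalIntegrable
  · exact (hcont.mono Ioi_subset_Ici_self).stronglyMeasurableAtFilter isOpen_Ioi t hat

theorem tendsto_zero_of_hasDerivAt_of_monotoneOn {g g' : ℝ → ℝ} {a l : ℝ}
    (hg : ∀ᶠ t in atTop, HasDerivAt g (g' t) t) (hmono : MonotoneOn g' (Ici a))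
    (hlim : Tendsto g atTop (𝓝 l)) : Tendsto g' atTop (𝓝 0) := by
  obtain ⟨b, hb⟩ := eventually_atTop.mp hg
  have mean_value : ∀ t ≥ b, ∃ c ∈ Ioo t (t + 1), g' c = g (t + 1) - g t := fun t ht => by
    simpa using exists_hasDerivAt_eq_slope g g' (lt_add_one t)
      (fun s hs => (hb s (ht.trans hs.1)).continuousAt.continuousWithinAt)
      (fun s hs => hb s (ht.trans hs.1.le))
  have hright : Tendsto (fun t => g (t + 1) - g t) atTop (𝓝 0) := by
    simpa using (hlim.comp (tendsto_atTop_add_const_right _ 1 tendsto_id)).sub hlim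
  have hleft : Tendsto (fun t => g t - g (t - 1)) atTop (𝓝 0) := by
    simpa [sub_eq_add_neg] using
      hlim.sub (hlim.comp (tendsto_atTop_add_const_right _ (-1) tendsto_id))
  refine tendsto_of_tendsto_of_tendsto_of_le_of_le' hleft hright ?_ ?_
  · filter_upwards [eventually_ge_atTop (max a b + 1)] with t ht
    obtain ⟨hat, hbt⟩ := max_le_iff.mp (le_sub_iff_add_le.mpr ht)
    obtain ⟨c, ⟨hc, hct⟩, hslope⟩ := mean_value (t - 1) hbt
    rw [sub_add_cancel] at hct hslope
    exact hslope ▸ hmono (hat.trans hc.le) (hat.trans (hc.trans hct).le) hct.le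
  · filter_upwards [eventually_ge_atTop a, eventually_ge_atTop b] with t hat hbt
    obtain ⟨c, ⟨hc, -⟩, hslope⟩ := mean_value t hbt
    exact hslope ▸ hmono hat (hat.trans hc.le) hc.le

namespace HasEventualSign

variable {g g' h : ℝ → ℝ}

theorem of_nonneg (hg : ∀ t, 0 ≤ g t) : HasEventualSign g :=
  .inl (.of_forall hg)

theorem const (c : ℝ) : HasEventualSign fun _ => c :=
  (le_total 0 c).imp (fun hc => .of_forall fun _ => hc) fun hc => .of_forall fun _ => hc

theorem neg (hg : HasEventualSign g) : HasEventualSign (-g) :=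
  hg.symm.imp (·.mono fun _ => neg_nonneg.mpr) (·.mono fun _ => neg_nonpos.mpr)

theorem mul (hg : HasEventualSign g) (hh : HasEventualSign h) :
    HasEventualSign fun t => g t * h t := by
  rcases hg with hg | hg <;> rcases hh with hh | hh
  · exact .inl ((hg.and hh).mono fun _ ⟨hg, hh⟩ => mul_nonneg hg hh)
  · exact .inr ((hg.and hh).mono fun _ ⟨hg, hh⟩ => mul_nonpos_of_nonneg_of_nonpos hg hh)
  · exact .inr ((hg.and hh).mono fun _ ⟨hg, hh⟩ => mul_nonpos_of_nonpos_of_nonneg hg hh)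
  · exact .inl ((hg.and hh).mono fun _ ⟨hg, hh⟩ => mul_nonneg_of_nonpos_of_nonpos hg hh)

theorem of_mul_pos (hgh : HasEventualSign fun t => g t * h t) (hh : ∀ t, 0 < h t) :
    HasEventualSign g :=
  hgh.imp (·.mono fun t ht => nonneg_of_mul_nonneg_left ht (hh t))
    (·.mono fun t ht => nonpos_of_mul_nonpos_left ht (hh t))

theorem of_monotoneOn {a : ℝ} (hg : MonotoneOn g (Ici a)) : HasEventualSign g := by
  by_cases hpos : ∃ b ≥ a, 0 ≤ g b
  · obtain ⟨b, hab, hb⟩ := hpos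
    exact .inl ((eventually_ge_atTop b).mono fun t ht => hb.trans (hg hab (hab.trans ht) ht))
  · push Not at hpos
    exact .inr ((eventually_ge_atTop a).mono fun t ht => (hpos t ht).le)

theorem of_antitoneOn {a : ℝ} (hg : AntitoneOn g (Ici a)) : HasEventualSign g :=
  neg_neg g ▸ (of_monotoneOn hg.neg).neg

theorem exists_monotoneOn_or_antitoneOn (hg' : HasEventualSign g')
    (hg : ∀ᶠ t in atTop, HasDerivAt g (g' t) t) :
    ∃ a, MonotoneOn g (Ici a) ∨ AntitoneOn g (Ici a) := by
  rcases hg' with hsign | hsign <;>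
    obtain ⟨a, ha⟩ := eventually_atTop.mp (hg.and hsign) <;>
    have hcont : ContinuousOn g (Ici a) := fun t ht => (ha t ht).1.continuousAt.continuousWithinAt
  · exact ⟨a, .inl <| monotoneOn_of_hasDerivWithinAt_nonneg (convex_Ici a) hcont
      (fun t ht => (ha t (interior_subset ht)).1.hasDerivWithinAt)
      (fun t ht => (ha t (interior_subset ht)).2)⟩
  · exact ⟨a, .inr <| antitoneOn_of_hasDerivWithinAt_nonpos (convex_Ici a) hcont
      (fun t ht => (ha t (interior_subset ht)).1.hasDerivWithinAt)
      (fun t ht => (ha t (interior_subset ht)).2)⟩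

theorem of_hasDerivAt (hg' : HasEventualSign g') (hg : ∀ᶠ t in atTop, HasDerivAt g (g' t) t) :
    HasEventualSign g := by
  obtain ⟨a, hmono | hanti⟩ := hg'.exists_monotoneOn_or_antitoneOn hg
  exacts [of_monotoneOn hmono, of_antitoneOn hanti]

theorem of_hasDerivAt_linear {y p q : ℝ → ℝ} (hq : HasEventualSign q)
    (hp : ∀ᶠ t in atTop, ContinuousAt p t)
    (hy : ∀ᶠ t in atTop, HasDerivAt y (q t - p t * y t) t) : HasEventualSign y := by
  obtain ⟨P, hP⟩ := exists_eventually_hasDerivAt_of_eventually_continuousAt hp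
  have hexp : ∀ t, 0 < Real.exp (P t) := fun t => Real.exp_pos _
  refine of_mul_pos ((hq.mul (of_nonneg fun t => (hexp t).le)).of_hasDerivAt ?_) hexp
  filter_upwards [hy, hP] with t hyt hPt
  exact (hyt.mul hPt.exp).congr_deriv (by ring)

theorem tendsto_zero_of_hasDerivAt {g'' : ℝ → ℝ} {l : ℝ} (hg'' : HasEventualSign g'')
    (hg : ∀ᶠ t in atTop, HasDerivAt g (g' t) t) (hg' : ∀ᶠ t in atTop, HasDerivAt g' (g'' t) t)
    (hlim : Tendsto g atTop (𝓝 l)) : Tendsto g' atTop (𝓝 0) := by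
  obtain ⟨a, hmono | hanti⟩ := hg''.exists_monotoneOn_or_antitoneOn hg'
  · exact tendsto_zero_of_hasDerivAt_of_monotoneOn hg hmono hlim
  · have hneg : Tendsto (-g') atTop (𝓝 0) :=
      tendsto_zero_of_hasDerivAt_of_monotoneOn (hg.mono fun _ ht => ht.neg) hanti.neg hlim.neg
    simpa using hneg.neg

end HasEventualSign

theorem stmt_3_general {β l : ℝ} {f f' f'' f''' : ℝ → ℝ}
    (hf : ∀ᶠ t in atTop, HasDerivAt f (f' t) t)
    (hf' : ∀ᶠ t in atTop, HasDerivAt f' (f'' t) t)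
    (hf'' : ∀ᶠ t in atTop, HasDerivAt f'' (f''' t) t)
    (heq : ∀ᶠ t in atTop, f''' t + f t * f'' t - β * f' t ^ 2 = 0)
    (hlim : Tendsto f' atTop (𝓝 l)) : Tendsto f'' atTop (𝓝 0) := by
  have hcont : ∀ᶠ t in atTop, ContinuousAt f t := hf.mono fun _ ht => ht.continuousAt
  have hode : ∀ᶠ t in atTop, HasDerivAt f'' (β * f' t ^ 2 - f t * f'' t) t := by
    filter_upwards [hf'', heq] with t ht heqt
    exact ht.congr_deriv (by linear_combination heqt)
  have hode_deriv : ∀ᶠ t in atTop, HasDerivAt (fun s => β * f' s ^ 2 - f s * f'' s)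
      ((2 * β - 1) * (f' t * f'' t) - f t * (β * f' t ^ 2 - f t * f'' t)) t := by
    filter_upwards [hf, hf', hode] with t ht ht' ht''
    exact (((ht'.pow 2).const_mul β).sub (ht.mul ht'')).congr_deriv (by push_cast; ring)
  have hsign'' : HasEventualSign f'' :=
    ((HasEventualSign.const β).mul (.of_nonneg fun t => sq_nonneg (f' t))).of_hasDerivAt_linear
      hcont hode
  have hsign' : HasEventualSign f' := hsign''.of_hasDerivAt hf'
  have hsign''' : HasEventualSign fun t => β * f' t ^ 2 - f t * f'' t :=
    ((HasEventualSign.const (2 * β - 1)).mul (hsign'.mul hsign'')).of_hasDerivAt_linear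
      hcont hode_deriv
  exact hsign'''.tendsto_zero_of_hasDerivAt hf' hode hlim

/-- Let β < 0 and let f be a non-constant solution of
f''' + f·f'' − β·(f')² = 0 on [t₀, ∞) with f'(t) → 0 as t → ∞.
Then f''(t) → 0 as t → ∞. -/
theorem stmt_3 (β : ℝ) (hβ : β < 0) (t₀ : ℝ)
    (f f' f'' f''' : ℝ → ℝ)
    (hf1 : ∀ t ∈ Set.Ici t₀, HasDerivAt f (f' t) t)
    (hf2 : ∀ t ∈ Set.Ici t₀, HasDerivAt f' (f'' t) t)
    (hf3 : ∀ t ∈ Set.Ici t₀, HasDerivAt f'' (f''' t) t)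
    (heq : ∀ t ∈ Set.Ici t₀, f''' t + f t * f'' t - β * (f' t) ^ 2 = 0)
    (hnc : ¬ ∃ c : ℝ, ∀ t ∈ Set.Ici t₀, f t = c)
    (hlim : Filter.Tendsto f' Filter.atTop (nhds 0)) :
    Filter.Tendsto f'' Filter.atTop (nhds 0) := by
  have eventually_mem : ∀ᶠ t in atTop, t ∈ Ici t₀ := eventually_ge_atTop t₀
  exact stmt_3_general (eventually_mem.mono hf1) (eventually_mem.mono hf2)
    (eventually_mem.mono hf3) (eventually_mem.mono heq) hlim
end

section
/- Let β be real and let f be a solution of equation (1) on an interval I such that f does not vanish on I. Define U = f'/f² and V = f''/f³ on I. Then on I one has U' = f·(V − 2U²) and V' = f·(−V + β·U² − 3·U·V). (Equivalently, after the change of independent variable s = ∫_τ^t f(ξ)dξ, the pair (u, v) = (U, V) satisfies the planar system u̇ = v − 2u², v̇ = −v + β·u² − 3·u·v.) -/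
/-!
Give `f`, `f'`, `f''`, `f'''` the weights 1, 2, 3, 4, so that `U`, `V` and `f''' / f ^ 4` have
weight 0. Differentiation raises the weight by one, which is the factor `f` in
`(g / f ^ n)' = f * (g' / f ^ (n + 1) - n * U * (g / f ^ n))`. Every term of the equation has
weight 4, so dividing it by `f ^ 4` gives `f''' / f ^ 4 = -V + β * U ^ 2`, which closes the system.
-/

theorem div_pow_four_eq_of_ode {K : Type*} [Field K] {β y y' y'' y''' : K} (hy : y ≠ 0)
    (hode : y''' + y * y'' - β * y' ^ 2 = 0) :
    y''' / y ^ 4 = -(y'' / y ^ 3) + β * (y' / y ^ 2) ^ 2 := by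
  field_simp
  linear_combination hode

section

variable {𝕜 𝕜' : Type*} [NontriviallyNormedField 𝕜] [NontriviallyNormedField 𝕜']
  [NormedAlgebra 𝕜 𝕜']

theorem hasDerivWithinAt_div_pow {f g : 𝕜 → 𝕜'} {f' g' : 𝕜'} {s : Set 𝕜} {t : 𝕜}
    (hg : HasDerivWithinAt g g' s t) (hf : HasDerivWithinAt f f' s t) (hf0 : f t ≠ 0) (n : ℕ) :
    HasDerivWithinAt (fun x ↦ g x / f x ^ n)
      (f t * (g' / f t ^ (n + 1) - n * (f' / f t ^ 2) * (g t / f t ^ n))) s t := by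
  refine (hg.fun_div (hf.fun_pow n) (pow_ne_zero n hf0)).congr_deriv ?_
  cases n with
  | zero => simp [mul_div_cancel₀, hf0]
  | succ n =>
    rw [Nat.add_sub_cancel]
    field_simp
    ring

theorem stmt_6_general {β : 𝕜'} {s : Set 𝕜} {t : 𝕜} {f f' f'' U V : 𝕜 → 𝕜'} {f''' : 𝕜'}
    (hf1 : HasDerivWithinAt f (f' t) s t) (hf2 : HasDerivWithinAt f' (f'' t) s t)
    (hf3 : HasDerivWithinAt f'' f''' s t)
    (hode : f''' + f t * f'' t - β * f' t ^ 2 = 0) (hf0 : f t ≠ 0)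
    (hU : ∀ x, U x = f' x / f x ^ 2) (hV : ∀ x, V x = f'' x / f x ^ 3) :
    HasDerivWithinAt U (f t * (V t - 2 * U t ^ 2)) s t ∧
      HasDerivWithinAt V (f t * (-V t + β * U t ^ 2 - 3 * U t * V t)) s t := by
  have hU' : HasDerivWithinAt U (f t * (V t - 2 * U t * U t)) s t := by
    simpa only [← hU, ← hV, Nat.cast_ofNat] using hasDerivWithinAt_div_pow hf2 hf1 hf0 2
  have hV' : HasDerivWithinAt V (f t * (f''' / f t ^ 4 - 3 * U t * V t)) s t := by
    simpa only [← hU, ← hV, Nat.cast_ofNat] using hasDerivWithinAt_div_pow hf3 hf1 hf0 3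
  have hclosed : f''' / f t ^ 4 = -V t + β * U t ^ 2 := by
    rw [hU, hV, div_pow_four_eq_of_ode hf0 hode]
  exact ⟨by simpa only [sq, mul_assoc] using hU', hclosed ▸ hV'⟩

end

/-- Blow-up coordinates: if f solves f''' + f·f'' − β·(f')² = 0 on an interval I
and f does not vanish on I, then U = f'/f² and V = f''/f³ satisfy
U' = f·(V − 2U²) and V' = f·(−V + β·U² − 3·U·V) on I. -/
theorem stmt_6 (β : ℝ) (I : Set ℝ) (hI : I.OrdConnected)
    (f f' f'' f''' : ℝ → ℝ)
    (hf1 : ∀ t ∈ I, HasDerivAt f (f' t) t)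
    (hf2 : ∀ t ∈ I, HasDerivAt f' (f'' t) t)
    (hf3 : ∀ t ∈ I, HasDerivAt f'' (f''' t) t)
    (heq : ∀ t ∈ I, f''' t + f t * f'' t - β * (f' t) ^ 2 = 0)
    (hf0 : ∀ t ∈ I, f t ≠ 0)
    (U V : ℝ → ℝ)
    (hU : ∀ t, U t = f' t / (f t) ^ 2)
    (hV : ∀ t, V t = f'' t / (f t) ^ 3) :
    ∀ t ∈ I,
      HasDerivAt U (f t * (V t - 2 * (U t) ^ 2)) t ∧
      HasDerivAt V (f t * (-(V t) + β * (U t) ^ 2 - 3 * U t * V t)) t := by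
  simp only [← hasDerivWithinAt_univ] at hf1 hf2 hf3 ⊢
  exact fun t ht ↦ stmt_6_general (hf1 t ht) (hf2 t ht) (hf3 t ht) (heq t ht) (hf0 t ht) hU hV
end

section
/- Let β be real and let f be a solution of equation (1) on [t₁, ∞) such that f(t) > 0, f'(t) > 0, f''(t) < 0 and f'''(t) > 0 for all t ≥ t₁. Then the function φ = f'·f^{−β} satisfies φ'(t) = −f'''(t)·f(t)^{−β−1} < 0 for t > t₁; in particular φ is strictly decreasing on [t₁, ∞) and tends to a finite limit l₀ ∈ [0, ∞) as t → ∞. -/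
/-!
Differentiating `f' * f ^ (-β)` produces the factor `f * f'' - β * f' ^ 2`, which the equation
turns into `-f'''`. The sign of `f'''` thus makes `φ` strictly decreasing, and `φ` is bounded
below by `0`.
-/

open Filter Set Topology

theorem tendsto_atTop_sInf_image_Ici_of_antitoneOn {ι α : Type*} [Preorder ι] [IsDirectedOrder ι]
    [ConditionallyCompletePartialOrderInf α] [TopologicalSpace α] [InfConvergenceClass α]
    {f : ι → α} {a : ι} (hf : AntitoneOn f (Ici a)) (hbdd : BddBelow (f '' Ici a)) :
    Tendsto f atTop (𝓝 (sInf (f '' Ici a))) := by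
  rw [← tendsto_comp_val_Ici_atTop (a := a), sInf_image']
  refine tendsto_atTop_ciInf (fun x y hxy => hf x.2 y.2 hxy) ?_
  rwa [image_eq_range] at hbdd

theorem hasDerivAt_mul_rpow_const {f g : ℝ → ℝ} {f' g' t : ℝ} (p : ℝ)
    (hf : HasDerivAt f f' t) (hg : HasDerivAt g g' t) (hft : f t ≠ 0) :
    HasDerivAt (fun s => g s * f s ^ p) ((f t * g' + p * g t * f') * f t ^ (p - 1)) t := by
  have hsplit : f t ^ p = f t ^ (p - 1) * f t := by
    rw [← Real.rpow_add_one hft, sub_add_cancel]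
  refine (hg.mul (hf.rpow_const (p := p) (Or.inl hft))).congr_deriv ?_
  rw [hsplit]
  ring

theorem hasDerivAt_mul_rpow_neg_of_ode {f f' : ℝ → ℝ} {f'' f''' β t : ℝ}
    (hf : HasDerivAt f (f' t) t) (hf' : HasDerivAt f' f'' t)
    (heq : f''' + f t * f'' - β * f' t ^ 2 = 0) (hft : f t ≠ 0) :
    HasDerivAt (fun s => f' s * f s ^ (-β)) (-f''' * f t ^ (-β - 1)) t := by
  have hfactor : f t * f'' + -β * f' t * f' t = -f''' := by linear_combination heq
  exact hfactor ▸ hasDerivAt_mul_rpow_const (-β) hf hf' hft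

theorem stmt_7_general (β : ℝ) (t₁ : ℝ)
    (f f' f'' f''' : ℝ → ℝ)
    (hf1 : ∀ t ∈ Set.Ici t₁, HasDerivAt f (f' t) t)
    (hf2 : ∀ t ∈ Set.Ici t₁, HasDerivAt f' (f'' t) t)
    (hf3 : ∀ t ∈ Set.Ici t₁, HasDerivAt f'' (f''' t) t)
    (heq : ∀ t ∈ Set.Ici t₁, f''' t + f t * f'' t - β * (f' t) ^ 2 = 0)
    (hpos : ∀ t ∈ Set.Ici t₁, 0 < f t ∧ 0 < f' t ∧ 0 < f''' t)
    (φ : ℝ → ℝ) (hφ : ∀ t, φ t = f' t * (f t) ^ (-β)) :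
    (∀ t > t₁, HasDerivAt φ (-(f''' t) * (f t) ^ (-β - 1)) t ∧
        -(f''' t) * (f t) ^ (-β - 1) < 0) ∧
    StrictAntiOn φ (Set.Ici t₁) ∧
    ∃ l₀ : ℝ, 0 ≤ l₀ ∧ Filter.Tendsto φ Filter.atTop (nhds l₀) := by
  obtain rfl : φ = fun t => f' t * f t ^ (-β) := funext hφ
  have hderiv t (ht : t ∈ Ici t₁) :=
    hasDerivAt_mul_rpow_neg_of_ode (hf1 t ht) (hf2 t ht) (heq t ht) (hpos t ht).1.ne'
  have hneg t (ht : t ∈ Ici t₁) : -(f''' t) * f t ^ (-β - 1) < 0 :=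
    mul_neg_of_neg_of_pos (neg_neg_of_pos (hpos t ht).2.2) (Real.rpow_pos_of_pos (hpos t ht).1 _)
  have hanti : StrictAntiOn (fun t => f' t * f t ^ (-β)) (Ici t₁) :=
    strictAntiOn_of_hasDerivWithinAt_neg (convex_Ici t₁)
      (fun t ht => (hderiv t ht).continuousAt.continuousWithinAt)
      (fun t ht => (hderiv t (interior_subset ht)).hasDerivWithinAt)
      (fun t ht => hneg t (interior_subset ht))
  have hnonneg : ∀ y ∈ (fun t => f' t * f t ^ (-β)) '' Ici t₁, 0 ≤ y :=
    forall_mem_image.2 fun t ht =>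
      mul_nonneg (hpos t ht).2.1.le (Real.rpow_nonneg (hpos t ht).1.le _)
  exact ⟨fun t ht => ⟨hderiv t ht.le, hneg t ht.le⟩, hanti, _, Real.sInf_nonneg hnonneg,
    tendsto_atTop_sInf_image_Ici_of_antitoneOn hanti.antitoneOn ⟨0, hnonneg⟩⟩

/-- If f solves f''' + f·f'' − β·(f')² = 0 on [t₁, ∞) with f > 0, f' > 0,
f'' < 0 and f''' > 0 on [t₁, ∞), then φ = f'·f^{−β} satisfies
φ'(t) = −f'''(t)·f(t)^{−β−1} < 0 for t > t₁, φ is strictly decreasing on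
[t₁, ∞) and tends to a finite limit l₀ ∈ [0, ∞) at infinity. -/
theorem stmt_7 (β : ℝ) (t₁ : ℝ)
    (f f' f'' f''' : ℝ → ℝ)
    (hf1 : ∀ t ∈ Set.Ici t₁, HasDerivAt f (f' t) t)
    (hf2 : ∀ t ∈ Set.Ici t₁, HasDerivAt f' (f'' t) t)
    (hf3 : ∀ t ∈ Set.Ici t₁, HasDerivAt f'' (f''' t) t)
    (heq : ∀ t ∈ Set.Ici t₁, f''' t + f t * f'' t - β * (f' t) ^ 2 = 0)
    (hpos : ∀ t ∈ Set.Ici t₁, 0 < f t ∧ 0 < f' t ∧ f'' t < 0 ∧ 0 < f''' t)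
    (φ : ℝ → ℝ) (hφ : ∀ t, φ t = f' t * (f t) ^ (-β)) :
    (∀ t > t₁, HasDerivAt φ (-(f''' t) * (f t) ^ (-β - 1)) t ∧
        -(f''' t) * (f t) ^ (-β - 1) < 0) ∧
    StrictAntiOn φ (Set.Ici t₁) ∧
    ∃ l₀ : ℝ, 0 ≤ l₀ ∧ Filter.Tendsto φ Filter.atTop (nhds l₀) :=
  stmt_7_general β t₁ f f' f'' f''' hf1 hf2 hf3 heq
    (fun t ht => (hpos t ht).imp_right (And.imp_right And.right)) φ hφ
end

section
/- Let β < 0 and let f be a non-constant unbounded solution of equation (1) on [t₀, ∞) satisfying condition (2), such that f is positive at infinity (i.e. f(t) > 0 for all sufficiently large t). Then f(t)^{−β−1}·f''(t) → 0 as t → ∞. -/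
/-!
Once `f > 0` and `f'' ≤ 0`, the equation `f''' + f f'' = β f' ^ 2` with `β ≤ 0` forbids `f''` from
becoming positive again, while `f'' > 0` from some point on would make `f' ≤ 0` and `f` bounded.
Hence `f` is eventually concave, `f'` decreases to `0` and `f` increases to infinity.

Put `p = -β - 1` and `k = -f ^ p f'' ≥ 0`. By the equation, `(f f' + f'')' = -p f' ^ 2`, and so
`(f ^ p (f f' + f''))' = p f ^ p f' f'' / f`, which is nonpositive if `p ≥ 0`; hence
`f ^ p f' ≤ C + k` (if `p ≤ 0` this is trivial). Substituting this in
`k' = (p f' / f - f) k - β f' (f ^ p f')` gives `k' ≤ -(f - p f' / f + β f') k - β C f'`, and `k`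
tends to `0` because the coefficient of `-k` tends to infinity and `f'` tends to `0`.
-/

open Filter Set Topology

section EventualDerivative

variable {g g' : ℝ → ℝ}

lemma exists_antitoneOn_Ici_of_deriv_nonpos (hg : ∀ᶠ t in atTop, HasDerivAt g (g' t) t)
    (hg' : ∀ᶠ t in atTop, g' t ≤ 0) : ∃ a, AntitoneOn g (Ici a) := by
  obtain ⟨a, ha⟩ := eventually_atTop.1 (hg.and hg')
  exact ⟨a, antitoneOn_of_hasDerivWithinAt_nonpos (convex_Ici a)
    (fun t ht => (ha t ht).1.continuousAt.continuousWithinAt)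
    (fun t ht => (ha t (interior_subset ht)).1.hasDerivWithinAt)
    (fun t ht => (ha t (interior_subset ht)).2)⟩

lemma isBoundedUnder_le_of_deriv_nonpos (hg : ∀ᶠ t in atTop, HasDerivAt g (g' t) t)
    (hg' : ∀ᶠ t in atTop, g' t ≤ 0) : IsBoundedUnder (· ≤ ·) atTop g := by
  obtain ⟨a, ha⟩ := exists_antitoneOn_Ici_of_deriv_nonpos hg hg'
  exact isBoundedUnder_of_eventually_le
    ((eventually_ge_atTop a).mono fun t ht => ha self_mem_Ici ht ht)

lemma eventually_limit_le_of_deriv_nonpos {L : ℝ} (hg : ∀ᶠ t in atTop, HasDerivAt g (g' t) t)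
    (hg' : ∀ᶠ t in atTop, g' t ≤ 0) (hL : Tendsto g atTop (𝓝 L)) : ∀ᶠ t in atTop, L ≤ g t := by
  obtain ⟨a, ha⟩ := exists_antitoneOn_Ici_of_deriv_nonpos hg hg'
  filter_upwards [eventually_ge_atTop a] with t ht
  exact le_of_tendsto hL
    ((eventually_ge_atTop t).mono fun s hs => ha ht (ht.trans hs) hs)

lemma tendsto_atTop_of_deriv_nonneg (hg : ∀ᶠ t in atTop, HasDerivAt g (g' t) t)
    (hg' : ∀ᶠ t in atTop, 0 ≤ g' t) (hunb : ¬ IsBoundedUnder (· ≤ ·) atTop g) :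
    Tendsto g atTop atTop := by
  obtain ⟨a, ha⟩ := exists_antitoneOn_Ici_of_deriv_nonpos (hg.mono fun _ => HasDerivAt.neg)
    (hg'.mono fun _ => neg_nonpos.2)
  refine tendsto_atTop.2 fun M => ?_
  have hM : ∃ᶠ t in atTop, M < g t := fun hle =>
    hunb (isBoundedUnder_of_eventually_le (hle.mono fun _ => not_lt.1))
  obtain ⟨s, hMs, has⟩ := (hM.and_eventually (eventually_ge_atTop a)).exists
  filter_upwards [eventually_ge_atTop s] with t hst
  exact hMs.le.trans (neg_le_neg_iff.1 (ha has (has.trans hst) hst))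

lemma eventually_le_of_frequently_le_of_deriv_nonpos {c : ℝ}
    (hg : ∀ᶠ t in atTop, HasDerivAt g (g' t) t) (hg' : ∀ᶠ t in atTop, c ≤ g t → g' t ≤ 0)
    (hc : ∃ᶠ t in atTop, g t ≤ c) : ∀ᶠ t in atTop, g t ≤ c := by
  obtain ⟨a, ha⟩ := eventually_atTop.1 (hg.and hg')
  obtain ⟨s, hsc, has⟩ := (hc.and_eventually (eventually_ge_atTop a)).exists
  filter_upwards [eventually_ge_atTop s] with t hst
  have below_line : ∀ ε > 0, g t ≤ c + ε * (t - s) := fun ε hε =>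
    image_le_of_deriv_right_lt_deriv_boundary (B := fun x => c + ε * (x - s)) (B' := fun _ => ε)
      (fun x hx => (ha x (has.trans hx.1)).1.continuousAt.continuousWithinAt)
      (fun x hx => (ha x (has.trans hx.1)).1.hasDerivWithinAt)
      (by simpa using hsc)
      (fun x => by simpa using (((hasDerivAt_id x).sub_const s).const_mul ε).const_add c)
      (fun x hx hcontact => ((ha x (has.trans hx.1)).2 (hcontact ▸
        le_add_of_nonneg_right (mul_nonneg hε.le (sub_nonneg.2 hx.1)))).trans_lt hε)
      (right_mem_Icc.2 hst)
  have hlim : Tendsto (fun ε : ℝ => c + ε * (t - s)) (𝓝[>] 0) (𝓝 c) := by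
    refine Tendsto.mono_left ?_ nhdsWithin_le_nhds
    exact Continuous.tendsto' (by fun_prop) _ _ (by simp)
  exact ge_of_tendsto hlim (eventually_mem_nhdsWithin.mono below_line)

lemma tendsto_gronwallBound_atTop {K : ℝ} (hK : K < 0) (δ ε : ℝ) :
    Tendsto (gronwallBound δ K ε) atTop (𝓝 (-ε / K)) := by
  have hexp : Tendsto (fun x => Real.exp (K * x)) atTop (𝓝 0) :=
    Real.tendsto_exp_atBot.comp (tendsto_id.const_mul_atTop_of_neg hK)
  rw [gronwallBound_of_K_ne_0 hK.ne]
  convert (hexp.const_mul δ).add ((hexp.sub_const 1).const_mul (ε / K)) using 2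
  ring

lemma tendsto_zero_of_deriv_le_neg_mul_add {c : ℝ} {δ : ℝ → ℝ} (hc : 0 < c)
    (hg : ∀ᶠ t in atTop, HasDerivAt g (g' t) t) (hg0 : ∀ᶠ t in atTop, 0 ≤ g t)
    (hδ : Tendsto δ atTop (𝓝 0)) (hg' : ∀ᶠ t in atTop, g' t ≤ -c * g t + δ t) :
    Tendsto g atTop (𝓝 0) := by
  refine tendsto_order.2 ⟨fun b hb => hg0.mono fun t ht => hb.trans_le ht, fun b hb => ?_⟩
  obtain ⟨ε, hε, hεb⟩ := exists_between (mul_pos hc hb)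
  obtain ⟨a, ha⟩ := eventually_atTop.1 (hg.and (hg'.and (hδ.eventually_le_const hε)))
  have gronwall : ∀ t ≥ a, g t ≤ gronwallBound (g a) (-c) ε (t - a) := fun t hat =>
    le_gronwallBound_of_liminf_deriv_right_le
      (fun x hx => (ha x hx.1).1.continuousAt.continuousWithinAt)
      (fun x hx _ => (ha x hx.1).1.hasDerivWithinAt.liminf_right_slope_le)
      le_rfl
      (fun x hx => (ha x hx.1).2.1.trans (add_le_add_right (ha x hx.1).2.2 _))
      t (right_mem_Icc.2 hat)
  have hlim := (tendsto_gronwallBound_atTop (neg_neg_of_pos hc) (g a) ε).comp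
    (tendsto_atTop_add_const_right atTop (-a) tendsto_id)
  have hlt : -ε / -c < b := by rwa [neg_div_neg_eq, div_lt_iff₀' hc]
  filter_upwards [eventually_ge_atTop a, hlim.eventually_lt_const hlt] with t hat hbt
  exact (gronwall t hat).trans_lt hbt

end EventualDerivative

lemma exists_norm_le_on_Ici_of_isBoundedUnder {E : Type*} [SeminormedAddCommGroup E]
    {f : ℝ → E} {a : ℝ} (hf : ContinuousOn f (Ici a))
    (hb : IsBoundedUnder (· ≤ ·) atTop fun t => ‖f t‖) :
    ∃ M, ∀ t ∈ Ici a, ‖f t‖ ≤ M := by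
  obtain ⟨M, hM⟩ := hb.eventually_le
  obtain ⟨b, hb⟩ := eventually_atTop.1 hM
  obtain ⟨B, hB⟩ := isCompact_Icc.exists_bound_of_continuousOn (hf.mono Icc_subset_Ici_self)
  exact ⟨max B M, fun t hat => (le_total t b).elim
    (fun htb => (hB t ⟨hat, htb⟩).trans (le_max_left B M))
    (fun hbt => (hb t hbt).trans (le_max_right B M))⟩

lemma hasDerivAt_rpow_mul {f g : ℝ → ℝ} {f' g' t : ℝ} (p : ℝ) (hf : HasDerivAt f f' t)
    (hg : HasDerivAt g g' t) (hft : f t ≠ 0) :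
    HasDerivAt (fun s => f s ^ p * g s) (f t ^ p * (p * f' / f t * g t + g')) t := by
  refine ((hf.rpow_const (Or.inl hft)).fun_mul hg).congr_deriv ?_
  rw [Real.rpow_sub_one hft]
  ring

/-- `f` solves equation (1), `f''' + f f'' - β f' ^ 2 = 0`, at all sufficiently large times. The
functions `f'`, `f''`, `f'''` are the successive derivatives of `f` there. -/
structure SolvesAtTop (β : ℝ) (f f' f'' f''' : ℝ → ℝ) : Prop where
  hasDerivAt : ∀ᶠ t in atTop, HasDerivAt f (f' t) t
  hasDerivAt_deriv : ∀ᶠ t in atTop, HasDerivAt f' (f'' t) t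
  hasDerivAt_deriv2 : ∀ᶠ t in atTop, HasDerivAt f'' (f''' t) t
  eqn : ∀ᶠ t in atTop, f''' t + f t * f'' t - β * f' t ^ 2 = 0

namespace SolvesAtTop

variable {β : ℝ} {f f' f'' f''' : ℝ → ℝ}

lemma eventually_deriv2_nonpos (h : SolvesAtTop β f f' f'' f''') (hβ : β ≤ 0)
    (hlim : Tendsto f' atTop (𝓝 0)) (hf : ∀ᶠ t in atTop, 0 ≤ f t)
    (hunb : ¬ IsBoundedUnder (· ≤ ·) atTop f) : ∀ᶠ t in atTop, f'' t ≤ 0 := by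
  refine eventually_le_of_frequently_le_of_deriv_nonpos h.hasDerivAt_deriv2 ?_ fun hpos => hunb ?_
  · filter_upwards [h.eqn, hf] with t heq hft hf''t
    linarith [mul_nonneg hft hf''t, mul_nonpos_of_nonpos_of_nonneg hβ (sq_nonneg (f' t))]
  · have hf'_nonpos : ∀ᶠ t in atTop, -0 ≤ -f' t :=
      eventually_limit_le_of_deriv_nonpos (h.hasDerivAt_deriv.mono fun _ => HasDerivAt.neg)
        (hpos.mono fun _ ht => neg_nonpos.2 (not_le.1 ht).le) hlim.neg
    exact isBoundedUnder_le_of_deriv_nonpos h.hasDerivAt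
      (hf'_nonpos.mono fun _ => neg_le_neg_iff.1)

lemma eventually_deriv_nonneg (h : SolvesAtTop β f f' f'' f''')
    (hlim : Tendsto f' atTop (𝓝 0)) (hf'' : ∀ᶠ t in atTop, f'' t ≤ 0) :
    ∀ᶠ t in atTop, 0 ≤ f' t :=
  eventually_limit_le_of_deriv_nonpos h.hasDerivAt_deriv hf'' hlim

lemma hasDerivAt_mul_deriv_add_deriv2 (h : SolvesAtTop β f f' f'' f''') :
    ∀ᶠ t in atTop, HasDerivAt (fun s => f s * f' s + f'' s) ((1 + β) * f' t ^ 2) t := by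
  filter_upwards [h.hasDerivAt, h.hasDerivAt_deriv, h.hasDerivAt_deriv2, h.eqn]
    with t hdf hdf' hdf'' heq
  refine ((hdf.fun_mul hdf').fun_add hdf'').congr_deriv ?_
  linear_combination heq

lemma isBoundedUnder_rpow_mul_add (h : SolvesAtTop β f f' f'' f''') (hβ : β ≤ -1)
    (hf : ∀ᶠ t in atTop, 0 < f t) (hf' : ∀ᶠ t in atTop, 0 ≤ f' t)
    (hf'' : ∀ᶠ t in atTop, f'' t ≤ 0) :
    IsBoundedUnder (· ≤ ·) atTop fun t => f t ^ (-β - 1) * (f t * f' t + f'' t) := by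
  refine isBoundedUnder_le_of_deriv_nonpos
    (g' := fun t => f t ^ (-β - 1) * ((-β - 1) * f' t / f t * f'' t)) ?_ ?_
  · filter_upwards [h.hasDerivAt, h.hasDerivAt_mul_deriv_add_deriv2, hf] with t hdf hdE hft
    refine (hasDerivAt_rpow_mul (-β - 1) hdf hdE hft.ne').congr_deriv ?_
    field_simp
    ring
  · filter_upwards [hf, hf', hf''] with t hft hf't hf''t
    have hp : 0 ≤ -β - 1 := by linarith
    exact mul_nonpos_of_nonneg_of_nonpos (by positivity)
      (mul_nonpos_of_nonneg_of_nonpos (by positivity) hf''t)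

lemma exists_rpow_mul_deriv_le (h : SolvesAtTop β f f' f'' f''')
    (htop : Tendsto f atTop atTop) (hlim : Tendsto f' atTop (𝓝 0))
    (hf'' : ∀ᶠ t in atTop, f'' t ≤ 0) :
    ∃ C, ∀ᶠ t in atTop, f t ^ (-β - 1) * f' t ≤ C - f t ^ (-β - 1) * f'' t := by
  have hf' := h.eventually_deriv_nonneg hlim hf''
  rcases le_total β (-1) with hβ | hβ
  · obtain ⟨C, hC⟩ := (h.isBoundedUnder_rpow_mul_add hβ (htop.eventually_gt_atTop 0) hf'
      hf'').eventually_le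
    refine ⟨C, ?_⟩
    filter_upwards [hC, htop.eventually_ge_atTop 1, hf'] with t hCt hft hf't
    have : f t ^ (-β - 1) * f' t ≤ f t ^ (-β - 1) * (f t * f' t) := by
      gcongr
      exact le_mul_of_one_le_left hf't hft
    linarith
  · refine ⟨1, ?_⟩
    filter_upwards [htop.eventually_ge_atTop 1, hlim.eventually_le_const one_pos, hf', hf'']
      with t hft hf't_le hf't hf''t
    have hrpow : f t ^ (-β - 1) ≤ 1 := Real.rpow_le_one_of_one_le_of_nonpos hft (by linarith)
    have hmul : f t ^ (-β - 1) * f' t ≤ 1 := mul_le_one₀ hrpow hf't hf't_le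
    have : f t ^ (-β - 1) * f'' t ≤ 0 := mul_nonpos_of_nonneg_of_nonpos (by positivity) hf''t
    linarith

theorem tendsto_rpow_mul_deriv2 (h : SolvesAtTop β f f' f'' f''') (hβ : β ≤ 0)
    (htop : Tendsto f atTop atTop) (hlim : Tendsto f' atTop (𝓝 0))
    (hf'' : ∀ᶠ t in atTop, f'' t ≤ 0) :
    Tendsto (fun t => f t ^ (-β - 1) * f'' t) atTop (𝓝 0) := by
  obtain ⟨C, hC⟩ := h.exists_rpow_mul_deriv_le htop hlim hf''
  set p := -β - 1
  have hf := htop.eventually_gt_atTop 0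
  have hdamping : Tendsto (fun t => f t + (β * f' t - p * f' t / f t)) atTop atTop :=
    htop.atTop_add ((hlim.const_mul β).sub ((hlim.const_mul p).div_atTop htop))
  have hforcing : Tendsto (fun t => -β * C * f' t) atTop (𝓝 0) := by
    simpa only [mul_zero] using hlim.const_mul (-β * C)
  suffices Tendsto (fun t => -(f t ^ p * f'' t)) atTop (𝓝 0) by
    simpa only [neg_neg, neg_zero] using this.neg
  refine tendsto_zero_of_deriv_le_neg_mul_add one_pos
    (g' := fun t => -(f t ^ p * (p * f' t / f t * f'' t + f''' t))) ?_ ?_ hforcing ?_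
  · filter_upwards [h.hasDerivAt, h.hasDerivAt_deriv2, hf] with t hdf hdf'' hft
    exact (hasDerivAt_rpow_mul p hdf hdf'' hft.ne').neg
  · filter_upwards [hf, hf''] with t hft hf''t
    exact neg_nonneg.2 (mul_nonpos_of_nonneg_of_nonpos (by positivity) hf''t)
  · filter_upwards [h.eqn, hC, hf, h.eventually_deriv_nonneg hlim hf'', hf'',
      hdamping.eventually_ge_atTop 1] with t heq hCt hft hf't hf''t hdamp
    have hk : 0 ≤ -(f t ^ p * f'' t) :=
      neg_nonneg.2 (mul_nonpos_of_nonneg_of_nonpos (by positivity) hf''t)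
    calc -(f t ^ p * (p * f' t / f t * f'' t + f''' t))
        = -(f t - p * f' t / f t) * -(f t ^ p * f'' t) + -β * f' t * (f t ^ p * f' t) := by
          linear_combination -f t ^ p * heq
      _ ≤ -(f t - p * f' t / f t) * -(f t ^ p * f'' t)
            + -β * f' t * (C - f t ^ p * f'' t) := by
          gcongr
          exact mul_nonneg (neg_nonneg.2 hβ) hf't
      _ = -(f t + (β * f' t - p * f' t / f t)) * -(f t ^ p * f'' t) + -β * C * f' t := by ring
      _ ≤ -1 * -(f t ^ p * f'' t) + -β * C * f' t := by gcongr

end SolvesAtTop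

/-- Let β < 0 and f be a non-constant unbounded solution of
f''' + f·f'' − β·(f')² = 0 on [t₀, ∞) with f'(t) → 0 at infinity and f positive
at infinity.  Then f(t)^{−β−1}·f''(t) → 0 as t → ∞. -/
theorem stmt_9 (β : ℝ) (hβ : β < 0) (t₀ : ℝ)
    (f f' f'' f''' : ℝ → ℝ)
    (hf1 : ∀ t ∈ Set.Ici t₀, HasDerivAt f (f' t) t)
    (hf2 : ∀ t ∈ Set.Ici t₀, HasDerivAt f' (f'' t) t)
    (hf3 : ∀ t ∈ Set.Ici t₀, HasDerivAt f'' (f''' t) t)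
    (heq : ∀ t ∈ Set.Ici t₀, f''' t + f t * f'' t - β * (f' t) ^ 2 = 0)
    (hnc : ¬ ∃ c : ℝ, ∀ t ∈ Set.Ici t₀, f t = c)
    (hunb : ¬ ∃ M : ℝ, ∀ t ∈ Set.Ici t₀, |f t| ≤ M)
    (hlim : Filter.Tendsto f' Filter.atTop (nhds 0))
    (hposinf : ∀ᶠ t in Filter.atTop, 0 < f t) :
    Filter.Tendsto (fun t => (f t) ^ (-β - 1) * f'' t) Filter.atTop (nhds 0) := by
  have hsol : SolvesAtTop β f f' f'' f''' :=
    ⟨(eventually_ge_atTop t₀).mono hf1, (eventually_ge_atTop t₀).mono hf2,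
      (eventually_ge_atTop t₀).mono hf3, (eventually_ge_atTop t₀).mono heq⟩
  have hcont : ContinuousOn f (Ici t₀) := fun t ht => (hf1 t ht).continuousAt.continuousWithinAt
  have hunb' : ¬ IsBoundedUnder (· ≤ ·) atTop f := fun hb => hunb <|
    exists_norm_le_on_Ici_of_isBoundedUnder hcont <|
      hb.mono_le (hposinf.mono fun _ ht => (Real.norm_of_nonneg ht.le).le)
  have hf'' := hsol.eventually_deriv2_nonpos hβ.le hlim (hposinf.mono fun _ => le_of_lt) hunb'
  have htop := tendsto_atTop_of_deriv_nonneg hsol.hasDerivAt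
    (hsol.eventually_deriv_nonneg hlim hf'') hunb'
  exact hsol.tendsto_rpow_mul_deriv2 hβ.le htop hlim hf''
end

section
/- Let β be real and let f be a solution of equation (1) on [t₁, ∞) such that f(t) < 0, f'(t) < 0, f''(t) > 0 and f'''(t) < 0 for all t ≥ t₁. Then the function ψ = f'·(−f)^{−β} satisfies ψ'(t) = f'''(t)·(−f(t))^{−β−1} < 0 for t > t₁; in particular ψ is strictly decreasing and negative on [t₁, ∞). -/
/-!
Differentiating gives `ψ' = (f''·(-f) + β·(f')²)·(-f)^(-β - 1)`. The bracket is exactly the value of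
`f'''` prescribed by the differential equation, so `ψ'` has the sign of `f'''`.
-/

theorem hasDerivWithinAt_mul_rpow_const {u v : ℝ → ℝ} {u' v' p x : ℝ} {s : Set ℝ}
    (hu : HasDerivWithinAt u u' s x) (hv : HasDerivWithinAt v v' s x) (hvx : v x ≠ 0) :
    HasDerivWithinAt (fun y ↦ u y * v y ^ p)
      ((u' * v x + p * u x * v') * v x ^ (p - 1)) s x := by
  have hpow : v x ^ p = v x ^ (p - 1) * v x := by
    rw [Real.rpow_sub_one hvx, div_mul_cancel₀ _ hvx]
  refine (hu.mul (hv.rpow_const (p := p) (.inl hvx))).congr_deriv ?_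
  rw [hpow]
  ring

/-- `f` solves equation (1), `f''' + f·f'' - β·(f')² = 0`, on `s`. The successive derivatives are
explicit functions, and they are derivatives within `s`, hence one-sided at an endpoint of `s`. -/
structure IsSimilaritySolutionOn_s12 (β : ℝ) (s : Set ℝ) (f f' f'' f''' : ℝ → ℝ) : Prop where
  hasDerivWithinAt : ∀ t ∈ s, HasDerivWithinAt f (f' t) s t
  hasDerivWithinAt_deriv : ∀ t ∈ s, HasDerivWithinAt f' (f'' t) s t
  hasDerivWithinAt_deriv_deriv : ∀ t ∈ s, HasDerivWithinAt f'' (f''' t) s t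
  equation : ∀ t ∈ s, f''' t + f t * f'' t - β * f' t ^ 2 = 0

namespace IsSimilaritySolutionOn_s12

variable {β : ℝ} {s : Set ℝ} {f f' f'' f''' : ℝ → ℝ}

theorem hasDerivWithinAt_deriv_mul_rpow (h : IsSimilaritySolutionOn_s12 β s f f' f'' f''')
    {t : ℝ} (ht : t ∈ s) (hft : f t ≠ 0) :
    HasDerivWithinAt (fun x ↦ f' x * (-f x) ^ (-β)) (f''' t * (-f t) ^ (-β - 1)) s t := by
  have third_deriv_eq : f'' t * -f t + -β * f' t * -f' t = f''' t := by
    linear_combination -h.equation t ht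
  rw [← third_deriv_eq]
  exact hasDerivWithinAt_mul_rpow_const (h.hasDerivWithinAt_deriv t ht)
    (h.hasDerivWithinAt t ht).fun_neg (neg_ne_zero.mpr hft)

theorem strictAntiOn_deriv_mul_rpow (h : IsSimilaritySolutionOn_s12 β s f f' f'' f''')
    (hs : Convex ℝ s) (hf : ∀ t ∈ s, f t < 0) (hf''' : ∀ t ∈ interior s, f''' t < 0) :
    StrictAntiOn (fun x ↦ f' x * (-f x) ^ (-β)) s := by
  have hderiv (t : ℝ) (ht : t ∈ s) := h.hasDerivWithinAt_deriv_mul_rpow ht (hf t ht).ne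
  refine strictAntiOn_of_hasDerivWithinAt_neg hs (fun t ht ↦ (hderiv t ht).continuousWithinAt)
    (fun t ht ↦ (hderiv t (interior_subset ht)).mono interior_subset) fun t ht ↦ ?_
  exact mul_neg_of_neg_of_pos (hf''' t ht)
    (Real.rpow_pos_of_pos (neg_pos.mpr (hf t (interior_subset ht))) _)

end IsSimilaritySolutionOn_s12

theorem stmt_12_general {β : ℝ} {s : Set ℝ} {f f' f'' f''' : ℝ → ℝ} (hs : Convex ℝ s)
    (h : IsSimilaritySolutionOn_s12 β s f f' f'' f''')
    (hsigns : ∀ t ∈ s, f t < 0 ∧ f' t < 0 ∧ f''' t < 0)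
    (ψ : ℝ → ℝ) (hψ : ∀ t, ψ t = f' t * (-f t) ^ (-β)) :
    (∀ t ∈ s, HasDerivWithinAt ψ (f''' t * (-f t) ^ (-β - 1)) s t ∧
        f''' t * (-f t) ^ (-β - 1) < 0) ∧
    StrictAntiOn ψ s ∧
    ∀ t ∈ s, ψ t < 0 := by
  obtain rfl : ψ = fun t ↦ f' t * (-f t) ^ (-β) := funext hψ
  have rpow_pos (p : ℝ) {t : ℝ} (ht : t ∈ s) : 0 < (-f t) ^ p :=
    Real.rpow_pos_of_pos (neg_pos.mpr (hsigns t ht).1) p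
  refine ⟨fun t ht ↦ ?_, ?_, fun t ht ↦ ?_⟩
  · exact ⟨h.hasDerivWithinAt_deriv_mul_rpow ht (hsigns t ht).1.ne,
      mul_neg_of_neg_of_pos (hsigns t ht).2.2 (rpow_pos _ ht)⟩
  · exact h.strictAntiOn_deriv_mul_rpow hs (fun t ht ↦ (hsigns t ht).1)
      fun t ht ↦ (hsigns t (interior_subset ht)).2.2
  · exact mul_neg_of_neg_of_pos (hsigns t ht).2.1 (rpow_pos _ ht)

/-- If f solves f''' + f·f'' − β·(f')² = 0 on [t₁, ∞) with f < 0, f' < 0,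
f'' > 0 and f''' < 0 on [t₁, ∞), then ψ = f'·(−f)^{−β} satisfies
ψ'(t) = f'''(t)·(−f(t))^{−β−1} < 0 for t > t₁; in particular ψ is strictly
decreasing and negative on [t₁, ∞). -/
theorem stmt_12 (β : ℝ) (t₁ : ℝ)
    (f f' f'' f''' : ℝ → ℝ)
    (hf1 : ∀ t ∈ Set.Ici t₁, HasDerivAt f (f' t) t)
    (hf2 : ∀ t ∈ Set.Ici t₁, HasDerivAt f' (f'' t) t)
    (hf3 : ∀ t ∈ Set.Ici t₁, HasDerivAt f'' (f''' t) t)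
    (heq : ∀ t ∈ Set.Ici t₁, f''' t + f t * f'' t - β * (f' t) ^ 2 = 0)
    (hsigns : ∀ t ∈ Set.Ici t₁, f t < 0 ∧ f' t < 0 ∧ 0 < f'' t ∧ f''' t < 0)
    (ψ : ℝ → ℝ) (hψ : ∀ t, ψ t = f' t * (-f t) ^ (-β)) :
    (∀ t > t₁, HasDerivAt ψ (f''' t * (-f t) ^ (-β - 1)) t ∧
        f''' t * (-f t) ^ (-β - 1) < 0) ∧
    StrictAntiOn ψ (Set.Ici t₁) ∧
    ∀ t ∈ Set.Ici t₁, ψ t < 0 := by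
  obtain ⟨hderiv, hanti_neg⟩ := stmt_12_general (convex_Ici t₁)
    ⟨fun t ht ↦ (hf1 t ht).hasDerivWithinAt, fun t ht ↦ (hf2 t ht).hasDerivWithinAt,
      fun t ht ↦ (hf3 t ht).hasDerivWithinAt, heq⟩
    (fun t ht ↦ ⟨(hsigns t ht).1, (hsigns t ht).2.1, (hsigns t ht).2.2.2⟩) ψ hψ
  exact ⟨fun t ht ↦ (hderiv t ht.le).imp_left (·.hasDerivAt (Ici_mem_nhds ht)), hanti_neg⟩
end

section
/- Let β be real and let f be a solution of equation (1) on [t₁, ∞) with f(t) < 0 for all t ≥ t₁. Then for all t ≥ s ≥ t₁ one has f''(t)·(−f(t))^{−β−1} − f''(s)·(−f(s))^{−β−1} − f'(t)·(−f(t))^{−β} + f'(s)·(−f(s))^{−β} = (β + 1)·∫_s^t f'(r)·f''(r)·(−f(r))^{−β−2} dr. -/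
/-!
The power `(-f) ^ (-β - 1)` acts as an integrating factor: differentiating
`f'' (-f) ^ (-β - 1) - f' (-f) ^ (-β)` produces `f''' + f f'' - β f' ^ 2` times this factor, plus
the remainder `(β + 1) f' f'' (-f) ^ (-β - 2)`. Along a solution only the remainder survives, and
the fundamental theorem of calculus applies.
-/

theorem integral_eq_sub_of_hasDerivWithinAt_uIcc {E : Type*} [NormedAddCommGroup E]
    [NormedSpace ℝ E] [CompleteSpace E] {F F' : ℝ → E} {a b : ℝ}
    (hF : ∀ x ∈ Set.uIcc a b, HasDerivWithinAt F (F' x) (Set.uIcc a b) x)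
    (hF' : IntervalIntegrable F' MeasureTheory.volume a b) :
    ∫ x in a..b, F' x = F b - F a :=
  intervalIntegral.integral_eq_sub_of_hasDeriv_right (HasDerivWithinAt.continuousOn hF)
    (fun x hx => ((hF x (Set.Ioo_subset_Icc_self hx)).hasDerivAt
      (Icc_mem_nhds hx.1 hx.2)).hasDerivWithinAt) hF'

section

variable {β : ℝ} {f f' f'' f''' : ℝ → ℝ} {I : Set ℝ}

theorem hasDerivWithinAt_mul_neg_rpow_sub_mul_neg_rpow (β : ℝ) {x : ℝ}
    (hf : HasDerivWithinAt f (f' x) I x) (hf' : HasDerivWithinAt f' (f'' x) I x)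
    (hf'' : HasDerivWithinAt f'' (f''' x) I x) (hneg : f x < 0) :
    HasDerivWithinAt (fun y => f'' y * (-f y) ^ (-β - 1) - f' y * (-f y) ^ (-β))
      ((f''' x + f x * f'' x - β * f' x ^ 2) * (-f x) ^ (-β - 1)
        + (β + 1) * (f' x * f'' x * (-f x) ^ (-β - 2))) I x := by
  have hne : -f x ≠ 0 := (neg_pos.mpr hneg).ne'
  have lower_exponent : (-f x) ^ (-β) = (-f x) ^ (-β - 1) * -f x := by
    rw [← Real.rpow_add_one hne, sub_add_cancel]
  have exponent_eq : -β - 1 - 1 = -β - 2 := by ring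
  refine ((hf''.mul (hf.neg.rpow_const (p := -β - 1) (Or.inl hne))).sub
    (hf'.mul (hf.neg.rpow_const (p := -β) (Or.inl hne)))).congr_deriv ?_
  simp only [Pi.neg_apply]
  rw [exponent_eq, lower_exponent]
  ring

theorem hasDerivWithinAt_mul_neg_rpow_sub_mul_neg_rpow_of_ode {x : ℝ}
    (hf : HasDerivWithinAt f (f' x) I x) (hf' : HasDerivWithinAt f' (f'' x) I x)
    (hf'' : HasDerivWithinAt f'' (f''' x) I x)
    (hode : f''' x + f x * f'' x - β * f' x ^ 2 = 0) (hneg : f x < 0) :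
    HasDerivWithinAt (fun y => f'' y * (-f y) ^ (-β - 1) - f' y * (-f y) ^ (-β))
      ((β + 1) * (f' x * f'' x * (-f x) ^ (-β - 2))) I x := by
  simpa only [hode, zero_mul, zero_add] using
    hasDerivWithinAt_mul_neg_rpow_sub_mul_neg_rpow β hf hf' hf'' hneg

theorem stmt_13_general (hI : I.OrdConnected)
    (hf : ∀ x ∈ I, HasDerivWithinAt f (f' x) I x)
    (hf' : ∀ x ∈ I, HasDerivWithinAt f' (f'' x) I x)
    (hf'' : ∀ x ∈ I, HasDerivWithinAt f'' (f''' x) I x)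
    (hode : ∀ x ∈ I, f''' x + f x * f'' x - β * f' x ^ 2 = 0)
    (hneg : ∀ x ∈ I, f x < 0) {s t : ℝ} (hs : s ∈ I) (ht : t ∈ I) :
    f'' t * (-f t) ^ (-β - 1) - f'' s * (-f s) ^ (-β - 1)
        - f' t * (-f t) ^ (-β) + f' s * (-f s) ^ (-β)
      = (β + 1) * ∫ r in s..t, f' r * f'' r * (-f r) ^ (-β - 2) := by
  have hst : Set.uIcc s t ⊆ I := hI.uIcc_subset hs ht
  have hcont : ContinuousOn (fun r => f' r * f'' r * (-f r) ^ (-β - 2)) I :=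
    ((HasDerivWithinAt.continuousOn hf').mul (HasDerivWithinAt.continuousOn hf'')).mul
      ((HasDerivWithinAt.continuousOn hf).neg.rpow_const
        fun r hr => Or.inl (neg_pos.mpr (hneg r hr)).ne')
  have hderiv : ∀ r ∈ Set.uIcc s t, HasDerivWithinAt
      (fun y => f'' y * (-f y) ^ (-β - 1) - f' y * (-f y) ^ (-β))
      ((β + 1) * (f' r * f'' r * (-f r) ^ (-β - 2))) (Set.uIcc s t) r := fun r hr =>
    (hasDerivWithinAt_mul_neg_rpow_sub_mul_neg_rpow_of_ode (hf r (hst hr)) (hf' r (hst hr))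
      (hf'' r (hst hr)) (hode r (hst hr)) (hneg r (hst hr))).mono hst
  rw [← intervalIntegral.integral_const_mul, integral_eq_sub_of_hasDerivWithinAt_uIcc hderiv
    ((hcont.mono hst).intervalIntegrable.const_mul (β + 1))]
  ring

end

/-- Identity (9): if f solves f''' + f·f'' − β·(f')² = 0 on [t₁, ∞) with f < 0,
then for all t ≥ s ≥ t₁,
f''(t)(−f(t))^{−β−1} − f''(s)(−f(s))^{−β−1} − f'(t)(−f(t))^{−β} + f'(s)(−f(s))^{−β}
  = (β+1)∫_s^t f'(r) f''(r) (−f(r))^{−β−2} dr. -/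
theorem stmt_13 (β : ℝ) (t₁ : ℝ)
    (f f' f'' f''' : ℝ → ℝ)
    (hf1 : ∀ t ∈ Set.Ici t₁, HasDerivAt f (f' t) t)
    (hf2 : ∀ t ∈ Set.Ici t₁, HasDerivAt f' (f'' t) t)
    (hf3 : ∀ t ∈ Set.Ici t₁, HasDerivAt f'' (f''' t) t)
    (heq : ∀ t ∈ Set.Ici t₁, f''' t + f t * f'' t - β * (f' t) ^ 2 = 0)
    (hneg : ∀ t ∈ Set.Ici t₁, f t < 0) :
    ∀ s ≥ t₁, ∀ t ≥ s,
      f'' t * (-f t) ^ (-β - 1) - f'' s * (-f s) ^ (-β - 1)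
        - f' t * (-f t) ^ (-β) + f' s * (-f s) ^ (-β)
      = (β + 1) * ∫ r in s..t, f' r * f'' r * (-f r) ^ (-β - 2) :=
  fun _ hs _ hst => stmt_13_general Set.ordConnected_Ici
    (fun x hx => (hf1 x hx).hasDerivWithinAt) (fun x hx => (hf2 x hx).hasDerivWithinAt)
    (fun x hx => (hf3 x hx).hasDerivWithinAt) heq hneg hs (le_trans hs hst)
end

section
/- Let β = −1 and let f be a solution of equation (1) on [t₀, ∞). Then the function f'' + f·f' is constant on [t₀, ∞). Moreover, if f is non-constant, unbounded and satisfies condition (2), and l denotes the constant value of f'' + f·f', then l ≠ 0 and |f(t)| / √t → √(2·|l|) as t → ∞. -/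
/-!
For `β = -1` the left-hand side of the equation is `(f'' + f f')'`, so `f'' + f f'` is a constant
`l`. This first integral is itself the derivative of `f' + f² / 2`, whence
`f² + 2 f' = 2 l t + const`. As `f'` stays bounded, `f² / t → 2 l`, which forces `l ≥ 0`; and if `l`
vanished, `f²` would be bounded.
-/

open Asymptotics Filter Set Topology

lemma eq_of_hasDerivWithinAt_zero_of_convex {𝕜 E : Type*} [RCLike 𝕜] [NormedAddCommGroup E]
    [NormedSpace 𝕜 E] {g : 𝕜 → E} {s : Set 𝕜} {x y : 𝕜} (hs : Convex ℝ s)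
    (hg : ∀ z ∈ s, HasDerivWithinAt g 0 s z) (hx : x ∈ s) (hy : y ∈ s) : g x = g y := by
  have hle : ‖g x - g y‖ ≤ 0 * ‖x - y‖ :=
    hs.norm_image_sub_le_of_norm_hasDerivWithin_le hg (fun _ _ ↦ norm_zero.le) hy hx
  rwa [zero_mul, norm_le_zero_iff, sub_eq_zero] at hle

lemma exists_norm_le_Ici_of_isBigO_one {α E : Type*} [LinearOrder α] [TopologicalSpace α]
    [CompactIccSpace α] [SeminormedAddCommGroup E] {f : α → E} {a : α}
    (hf : ContinuousOn f (Ici a)) (hO : f =O[atTop] (1 : α → ℝ)) :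
    ∃ M, ∀ t ∈ Ici a, ‖f t‖ ≤ M := by
  have : Nonempty α := ⟨a⟩
  obtain ⟨C, hC⟩ := hO.bound
  obtain ⟨T, hT⟩ := eventually_atTop.1 hC
  obtain ⟨M, hM⟩ := isCompact_Icc.exists_bound_of_continuousOn
    (hf.mono (Icc_subset_Ici_self : Icc a T ⊆ Ici a))
  refine ⟨max M C, fun t ht ↦ ?_⟩
  rcases le_total t T with htT | hTt
  · exact le_max_of_le_left (hM t ⟨ht, htT⟩)
  · exact le_max_of_le_right (by simpa using hT t hTt)

lemma tendsto_abs_div_sqrt_of_tendsto_sq_div {α : Type*} {F : Filter α} {f g : α → ℝ} {a : ℝ}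
    (h : Tendsto (fun x ↦ f x ^ 2 / g x) F (𝓝 a)) :
    Tendsto (fun x ↦ |f x| / √(g x)) F (𝓝 √a) := by
  simpa only [Real.sqrt_div (sq_nonneg _), Real.sqrt_sq_eq_abs] using h.sqrt

section FirstIntegral

variable {f f' f'' f''' : ℝ → ℝ} {s : Set ℝ} {a t t₀ l : ℝ}

lemma deriv2_add_mul_deriv_eq_of_convex (hs : Convex ℝ s)
    (hf : ∀ x ∈ s, HasDerivWithinAt f (f' x) s x)
    (hf' : ∀ x ∈ s, HasDerivWithinAt f' (f'' x) s x)
    (hf'' : ∀ x ∈ s, HasDerivWithinAt f'' (f''' x) s x)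
    (heq : ∀ x ∈ s, f''' x + f x * f'' x + f' x ^ 2 = 0) (ht : t ∈ s) (ha : a ∈ s) :
    f'' t + f t * f' t = f'' a + f a * f' a := by
  refine eq_of_hasDerivWithinAt_zero_of_convex (g := fun x ↦ f'' x + f x * f' x) hs
    (fun x hx ↦ ?_) ht ha
  refine ((hf'' x hx).add ((hf x hx).mul (hf' x hx))).congr_deriv ?_
  linear_combination heq x hx

lemma sq_add_two_mul_deriv_eq_of_convex (hs : Convex ℝ s)
    (hf : ∀ x ∈ s, HasDerivWithinAt f (f' x) s x)
    (hf' : ∀ x ∈ s, HasDerivWithinAt f' (f'' x) s x)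
    (hl : ∀ x ∈ s, f'' x + f x * f' x = l) (ht : t ∈ s) (ha : a ∈ s) :
    f t ^ 2 + 2 * f' t = 2 * l * (t - a) + (f a ^ 2 + 2 * f' a) := by
  have hconst : f t ^ 2 + 2 * f' t - 2 * l * t = f a ^ 2 + 2 * f' a - 2 * l * a := by
    refine eq_of_hasDerivWithinAt_zero_of_convex (g := fun x ↦ f x ^ 2 + 2 * f' x - 2 * l * x) hs
      (fun x hx ↦ ?_) ht ha
    refine ((((hf x hx).fun_pow 2).add ((hf' x hx).const_mul 2)).sub
      ((hasDerivWithinAt_id x s).const_mul (2 * l))).congr_deriv ?_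
    linear_combination 2 * hl x hx
  linear_combination hconst

lemma tendsto_sq_div_id_of_deriv2_add_mul_deriv_eq
    (hf : ∀ t ∈ Ici t₀, HasDerivWithinAt f (f' t) (Ici t₀) t)
    (hf' : ∀ t ∈ Ici t₀, HasDerivWithinAt f' (f'' t) (Ici t₀) t)
    (hl : ∀ t ∈ Ici t₀, f'' t + f t * f' t = l) (ho : f' =o[atTop] (id : ℝ → ℝ)) :
    Tendsto (fun t ↦ f t ^ 2 / t) atTop (𝓝 (2 * l)) := by
  set c := f t₀ ^ 2 + 2 * f' t₀ - 2 * l * t₀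
  have hrem : Tendsto (fun t ↦ (c - 2 * f' t) / t) atTop (𝓝 0) :=
    ((isLittleO_const_id_atTop c).sub (ho.const_mul_left 2)).tendsto_div_nhds_zero
  have hsum : Tendsto (fun t ↦ 2 * l + (c - 2 * f' t) / t) atTop (𝓝 (2 * l)) := by
    simpa only [add_zero] using hrem.const_add (2 * l)
  refine hsum.congr' ?_
  filter_upwards [eventually_ge_atTop t₀, eventually_ne_atTop 0] with t ht ht_ne
  have hf_sq : f t ^ 2 = 2 * l * t + (c - 2 * f' t) := by
    linear_combination sq_add_two_mul_deriv_eq_of_convex (convex_Ici t₀) hf hf' hl ht self_mem_Ici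
  rw [hf_sq, add_div, mul_div_cancel_right₀ _ ht_ne]

lemma exists_abs_le_of_deriv2_add_mul_deriv_eq_zero
    (hf : ∀ t ∈ Ici t₀, HasDerivWithinAt f (f' t) (Ici t₀) t)
    (hf' : ∀ t ∈ Ici t₀, HasDerivWithinAt f' (f'' t) (Ici t₀) t)
    (hzero : ∀ t ∈ Ici t₀, f'' t + f t * f' t = 0) (hO : f' =O[atTop] (1 : ℝ → ℝ)) :
    ∃ M, ∀ t ∈ Ici t₀, |f t| ≤ M := by
  set c := f t₀ ^ 2 + 2 * f' t₀
  have hc : (fun t ↦ c - 2 * f' t) =O[atTop] (1 : ℝ → ℝ) :=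
    (isBigO_const_const c one_ne_zero atTop).sub (hO.const_mul_left 2)
  have hf_sq : (fun t ↦ c - 2 * f' t) =ᶠ[atTop] f ^ 2 := by
    filter_upwards [eventually_ge_atTop t₀] with t ht
    rw [Pi.pow_apply]
    linear_combination
      -sq_add_two_mul_deriv_eq_of_convex (convex_Ici t₀) hf hf' hzero ht self_mem_Ici
  have hfO : f =O[atTop] (1 : ℝ → ℝ) :=
    .of_pow two_ne_zero (by simpa only [one_pow] using hc.congr' hf_sq .rfl)
  exact exists_norm_le_Ici_of_isBigO_one (fun t ht ↦ (hf t ht).continuousWithinAt) hfO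

end FirstIntegral

/-- Remark 4: for β = −1, if f solves f''' + f·f'' − β·(f')² = 0 on [t₀, ∞),
then f'' + f·f' is constant on [t₀, ∞); and if moreover f is non-constant,
unbounded and f'(t) → 0 at infinity, then the constant value l of f'' + f·f'
is nonzero and |f(t)|/√t → √(2|l|) as t → ∞. -/
theorem stmt_15 (β : ℝ) (hβ : β = -1) (t₀ : ℝ)
    (f f' f'' f''' : ℝ → ℝ)
    (hf1 : ∀ t ∈ Set.Ici t₀, HasDerivAt f (f' t) t)
    (hf2 : ∀ t ∈ Set.Ici t₀, HasDerivAt f' (f'' t) t)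
    (hf3 : ∀ t ∈ Set.Ici t₀, HasDerivAt f'' (f''' t) t)
    (heq : ∀ t ∈ Set.Ici t₀, f''' t + f t * f'' t - β * (f' t) ^ 2 = 0) :
    (∃ l : ℝ, ∀ t ∈ Set.Ici t₀, f'' t + f t * f' t = l) ∧
    ((¬ ∃ c : ℝ, ∀ t ∈ Set.Ici t₀, f t = c) →
     (¬ ∃ M : ℝ, ∀ t ∈ Set.Ici t₀, |f t| ≤ M) →
     Filter.Tendsto f' Filter.atTop (nhds 0) →
     ∀ l : ℝ, (∀ t ∈ Set.Ici t₀, f'' t + f t * f' t = l) →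
       l ≠ 0 ∧
       Filter.Tendsto (fun t => |f t| / Real.sqrt t) Filter.atTop
         (nhds (Real.sqrt (2 * |l|)))) := by
  have hf t (ht : t ∈ Ici t₀) := (hf1 t ht).hasDerivWithinAt (s := Ici t₀)
  have hf' t (ht : t ∈ Ici t₀) := (hf2 t ht).hasDerivWithinAt (s := Ici t₀)
  have hf'' t (ht : t ∈ Ici t₀) := (hf3 t ht).hasDerivWithinAt (s := Ici t₀)
  have heq' t (ht : t ∈ Ici t₀) : f''' t + f t * f'' t + f' t ^ 2 = 0 := by
    simpa [hβ] using heq t ht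
  refine ⟨⟨_, fun t ht ↦ deriv2_add_mul_deriv_eq_of_convex (convex_Ici t₀) hf hf' hf'' heq' ht
    self_mem_Ici⟩, fun _ hunbdd hlim l hl ↦ ?_⟩
  have hO : f' =O[atTop] (1 : ℝ → ℝ) := hlim.isBigO_one ℝ
  have hsq : Tendsto (fun t ↦ f t ^ 2 / t) atTop (𝓝 (2 * l)) :=
    tendsto_sq_div_id_of_deriv2_add_mul_deriv_eq hf hf' hl
      (hO.trans_isLittleO (isLittleO_const_id_atTop 1))
  have hl_nonneg : 0 ≤ 2 * l :=
    ge_of_tendsto hsq ((eventually_ge_atTop 0).mono fun t ht ↦ div_nonneg (sq_nonneg _) ht)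
  constructor
  · rintro rfl
    exact hunbdd (exists_abs_le_of_deriv2_add_mul_deriv_eq_zero hf hf' hl hO)
  · rw [abs_of_nonneg (nonneg_of_mul_nonneg_right hl_nonneg two_pos)]
    exact tendsto_abs_div_sqrt_of_tendsto_sq_div hsq
end

section
/- Let β be a real number with β ≠ 2 and let τ ∈ ℝ. Then the function g(t) = 6 / ((2 − β)·(t − τ)) is a solution of equation (1) on (τ, ∞) and satisfies condition (2); moreover g is bounded on [t₀, ∞) for every t₀ > τ. -/
/-!
For `f t = c * (t - τ) ^ n` the term `f'''` has degree `n - 3`, while `f * f''` and `f' ^ 2` have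
degree `2 * n - 2`; these agree exactly for `n = -1`. The left side of the equation is then
`c * ((2 - β) * c - 6) * (t - τ) ^ (-4)`, which vanishes for `c = 6 / (2 - β)`.
-/

open Filter Set Topology

theorem hasDerivAt_const_mul_sub_zpow {𝕜 : Type*} [NontriviallyNormedField 𝕜] (a τ : 𝕜) (n : ℤ)
    {t : 𝕜} (h : t ≠ τ ∨ 0 ≤ n) :
    HasDerivAt (fun x ↦ a * (x - τ) ^ n) (a * n * (t - τ) ^ (n - 1)) t := by
  simpa only [mul_assoc] using
    ((hasDerivAt_zpow n (t - τ) (h.imp_left sub_ne_zero.2)).comp_sub_const t τ).const_mul a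

-- The left side is `f''' + f * f'' - β * f' ^ 2` for `f x = c * x ^ (-1)`, derivatives written out.
theorem ode_residual_simple_pole {K : Type*} [Field K] (β c x : K) :
    -(6 * c) * x ^ (-4 : ℤ) + c * x ^ (-1 : ℤ) * (2 * c * x ^ (-3 : ℤ)) -
        β * (-c * x ^ (-2 : ℤ)) ^ 2 = c * ((2 - β) * c - 6) * x ^ (-4 : ℤ) := by
  simp only [zpow_neg, zpow_ofNat]
  ring

theorem tendsto_const_mul_sub_zpow_atTop_zero {K : Type*} [Field K] [LinearOrder K]
    [IsStrictOrderedRing K] [TopologicalSpace K] [OrderTopology K] (a τ : K) {n : ℤ} (hn : n < 0) :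
    Tendsto (fun t ↦ a * (t - τ) ^ n) atTop (𝓝 0) :=
  (tendsto_const_mul_zpow_atTop_zero hn).comp <| by
    simpa only [id, sub_eq_add_neg] using tendsto_atTop_add_const_right atTop (-τ) tendsto_id

theorem zpow_antitoneOn_Ioi_of_nonpos {G₀ : Type*} [GroupWithZero G₀] [LinearOrder G₀]
    [ZeroLEOneClass G₀] [PosMulStrictMono G₀] [MulPosStrictMono G₀] {n : ℤ} (hn : n ≤ 0) :
    AntitoneOn (fun x : G₀ ↦ x ^ n) (Ioi 0) := fun x hx y _ hxy ↦ by
  have hpow : x ^ (-n) ≤ y ^ (-n) := zpow_le_zpow_left₀ (neg_nonneg.2 hn) (le_of_lt hx) hxy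
  simpa only [zpow_neg, inv_inv] using inv_anti₀ (zpow_pos hx _) hpow

theorem abs_const_mul_sub_zpow_le {K : Type*} [Field K] [LinearOrder K] [IsStrictOrderedRing K]
    (a : K) {τ t₀ t : K} {n : ℤ} (hn : n ≤ 0) (h₀ : τ < t₀) (ht : t₀ ≤ t) :
    |a * (t - τ) ^ n| ≤ |a| * (t₀ - τ) ^ n := by
  have hpos : 0 < t₀ - τ := sub_pos.2 h₀
  have hle : t₀ - τ ≤ t - τ := sub_le_sub_right ht τ
  rw [abs_mul, abs_of_pos (zpow_pos (hpos.trans_le hle) n)]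
  gcongr
  exact zpow_antitoneOn_Ioi_of_nonpos hn hpos (hpos.trans_le hle) hle

/-- Remark 5: for β ≠ 2 and τ ∈ ℝ, the function g(t) = 6/((2−β)(t−τ)) is a
solution of f''' + f·f'' − β·(f')² = 0 on (τ, ∞), satisfies g'(t) → 0 at
infinity, and is bounded on [t₀, ∞) for every t₀ > τ. -/
theorem stmt_16 (β : ℝ) (hβ : β ≠ 2) (τ : ℝ)
    (g : ℝ → ℝ) (hg : ∀ t, g t = 6 / ((2 - β) * (t - τ))) :
    (∃ g' g'' g''' : ℝ → ℝ,
      (∀ t ∈ Set.Ioi τ, HasDerivAt g (g' t) t) ∧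
      (∀ t ∈ Set.Ioi τ, HasDerivAt g' (g'' t) t) ∧
      (∀ t ∈ Set.Ioi τ, HasDerivAt g'' (g''' t) t) ∧
      (∀ t ∈ Set.Ioi τ, g''' t + g t * g'' t - β * (g' t) ^ 2 = 0) ∧
      Filter.Tendsto g' Filter.atTop (nhds 0)) ∧
    ∀ t₀ > τ, ∃ M : ℝ, ∀ t ∈ Set.Ici t₀, |g t| ≤ M := by
  set c : ℝ := 6 / (2 - β)
  have hc : (2 - β) * c = 6 := mul_div_cancel₀ 6 (sub_ne_zero.2 hβ.symm)
  obtain rfl : g = fun t ↦ c * (t - τ) ^ (-1 : ℤ) := by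
    funext t
    rw [hg, zpow_neg_one, ← div_eq_mul_inv, div_div]
  have hderiv (a : ℝ) (n : ℤ) {t : ℝ} (ht : t ∈ Ioi τ) :
      HasDerivAt (fun x ↦ a * (x - τ) ^ n) (a * n * (t - τ) ^ (n - 1)) t :=
    hasDerivAt_const_mul_sub_zpow a τ n (Or.inl (ne_of_gt ht))
  refine ⟨⟨fun t ↦ -c * (t - τ) ^ (-2 : ℤ), fun t ↦ 2 * c * (t - τ) ^ (-3 : ℤ),
    fun t ↦ -(6 * c) * (t - τ) ^ (-4 : ℤ), fun t ht ↦ ?_, fun t ht ↦ ?_, fun t ht ↦ ?_,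
    fun t _ ↦ ?_, tendsto_const_mul_sub_zpow_atTop_zero _ _ (by norm_num)⟩,
    fun t₀ h₀ ↦ ⟨_, fun t ht ↦ abs_const_mul_sub_zpow_le c (by norm_num) h₀ ht⟩⟩
  · exact (hderiv c (-1) ht).congr_deriv (by push_cast; ring)
  · exact (hderiv (-c) (-2) ht).congr_deriv (by push_cast; ring)
  · exact (hderiv (2 * c) (-3) ht).congr_deriv (by push_cast; ring)
  · rw [ode_residual_simple_pole, hc, sub_self, mul_zero, zero_mul]
end

section
/- Let β ≥ 0 and let f be a non-constant solution of equation (1) on [t₀, ∞) satisfying condition (2). Then f is bounded on [t₀, ∞). -/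
/-!
Only the differential inequality `f''' + f f'' ≥ 0` and `f' → 0` matter. With an antiderivative `F`
of `f`, the function `e^F f''` is nondecreasing, so once `f''` is positive it stays positive.

If `f''` becomes positive, then `f'` increases to `0`, so `f` decreases; if `f` became negative,
then `f''' ≥ -f f'' ≥ 0` from there on, and a nondecreasing positive `f''` is incompatible with the
convergence of `f'`. So `f` stays between `0` and its value at that time.

If `f'' ≤ 0` throughout, then `f'` decreases to `0`, so `f` increases; once `f ≥ 1`, we have
`(f'' + f')' = f''' + f'' ≥ f''' + f f'' ≥ 0`, which forces `f'' + f' ≤ 0`. So `f' + f` is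
nonincreasing from then on and bounds `f` from above.
-/

open Set Filter Topology

section Tendsto

variable {ι α : Type*} [SemilatticeSup ι] [TopologicalSpace α] [Preorder α]
  {g : ι → α} {a : ι} {l : α}

lemma le_of_monotoneOn_Ici_of_tendsto [ClosedIciTopology α] (hg : MonotoneOn g (Ici a))
    (hlim : Tendsto g atTop (𝓝 l)) : ∀ t ∈ Ici a, g t ≤ l := fun t ht ↦
  have : Nonempty ι := ⟨a⟩
  ge_of_tendsto hlim <| (eventually_ge_atTop t).mono fun _ hts ↦ hg ht (ht.trans hts) hts

lemma ge_of_antitoneOn_Ici_of_tendsto [ClosedIicTopology α] (hg : AntitoneOn g (Ici a))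
    (hlim : Tendsto g atTop (𝓝 l)) : ∀ t ∈ Ici a, l ≤ g t :=
  le_of_monotoneOn_Ici_of_tendsto (α := αᵒᵈ) hg hlim

end Tendsto

lemma exists_norm_le_Ici_of_continuousOn {E : Type*} [SeminormedAddCommGroup E] {f : ℝ → E}
    {a T M : ℝ} (hf : ContinuousOn f (Ici a)) (hM : ∀ t ∈ Ici T, ‖f t‖ ≤ M) :
    ∃ C, ∀ t ∈ Ici a, ‖f t‖ ≤ C := by
  obtain ⟨K, hK⟩ := isCompact_Icc.exists_bound_of_continuousOn
    (hf.mono (Icc_subset_Ici_self : Icc a T ⊆ Ici a))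
  refine ⟨max K M, fun t ht ↦ ?_⟩
  rcases le_total t T with htT | hTt
  · exact (hK t ⟨ht, htT⟩).trans (le_max_left K M)
  · exact (hM t hTt).trans (le_max_right K M)

section OneSidedDerivatives

variable {a : ℝ} {y y' : ℝ → ℝ}

lemma monotoneOn_of_hasDerivWithinAt_self_nonneg {D : Set ℝ} (hD : Convex ℝ D)
    (hy : ∀ t ∈ D, HasDerivWithinAt y (y' t) D t) (hy' : ∀ t ∈ D, 0 ≤ y' t) : MonotoneOn y D :=
  monotoneOn_of_hasDerivWithinAt_nonneg hD (HasDerivWithinAt.continuousOn hy)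
    (fun t ht ↦ (hy t (interior_subset ht)).mono interior_subset)
    (fun t ht ↦ hy' t (interior_subset ht))

lemma antitoneOn_of_hasDerivWithinAt_self_nonpos {D : Set ℝ} (hD : Convex ℝ D)
    (hy : ∀ t ∈ D, HasDerivWithinAt y (y' t) D t) (hy' : ∀ t ∈ D, y' t ≤ 0) : AntitoneOn y D :=
  antitoneOn_of_hasDerivWithinAt_nonpos hD (HasDerivWithinAt.continuousOn hy)
    (fun t ht ↦ (hy t (interior_subset ht)).mono interior_subset)
    (fun t ht ↦ hy' t (interior_subset ht))

lemma nonpos_of_le_hasDerivWithinAt_of_tendsto {m l : ℝ}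
    (hy : ∀ t ∈ Ici a, HasDerivWithinAt y (y' t) (Ici a) t) (hm : ∀ t ∈ Ici a, m ≤ y' t)
    (hlim : Tendsto y atTop (𝓝 l)) : m ≤ 0 := by
  have hmono : MonotoneOn (fun t ↦ y t - m * t) (Ici a) :=
    monotoneOn_of_hasDerivWithinAt_self_nonneg (convex_Ici a)
      (fun t ht ↦ (hy t ht).sub ((hasDerivWithinAt_id t _).const_mul m))
      fun t ht ↦ by linarith [hm t ht]
  have hincr : Tendsto (fun t ↦ y (t + 1) - y t) atTop (𝓝 0) := by
    simpa only [sub_self, Function.comp_apply, id_eq] using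
      (hlim.comp (tendsto_atTop_add_const_right atTop 1 tendsto_id)).sub hlim
  refine ge_of_tendsto hincr <| (eventually_ge_atTop a).mono fun t ht ↦ ?_
  have hstep := hmono ht (show a ≤ t + 1 by linarith) (by linarith)
  linarith

lemma exists_hasDerivWithinAt_Ici_of_continuousOn {E : Type*} [NormedAddCommGroup E]
    [NormedSpace ℝ E] [CompleteSpace E] {p : ℝ → E} (hp : ContinuousOn p (Ici a)) :
    ∃ P : ℝ → E, ∀ t ∈ Ici a, HasDerivWithinAt P (p t) (Ici a) t := by
  have hcont : Continuous fun t ↦ p (max a t) :=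
    hp.comp_continuous (continuous_const.max continuous_id) (le_max_left a)
  refine ⟨fun t ↦ ∫ s in a..t, p (max a s), fun t ht ↦ ?_⟩
  have hderiv := (hcont.integral_hasStrictDerivAt a t).hasDerivAt
  rw [max_eq_right (mem_Ici.1 ht)] at hderiv
  exact hderiv.hasDerivWithinAt

lemma pos_of_nonneg_hasDerivWithinAt_add_mul {p : ℝ → ℝ} (hp : ContinuousOn p (Ici a))
    (hy : ∀ t ∈ Ici a, HasDerivWithinAt y (y' t) (Ici a) t)
    (hineq : ∀ t ∈ Ici a, 0 ≤ y' t + p t * y t) (hya : 0 < y a) : ∀ t ∈ Ici a, 0 < y t := by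
  intro t ht
  obtain ⟨P, hP⟩ := exists_hasDerivWithinAt_Ici_of_continuousOn hp
  have hmono : MonotoneOn (fun t ↦ y t * Real.exp (P t)) (Ici a) :=
    monotoneOn_of_hasDerivWithinAt_self_nonneg (convex_Ici a)
      (fun t ht ↦ (hy t ht).mul (hP t ht).exp) fun t ht ↦ calc
        0 ≤ (y' t + p t * y t) * Real.exp (P t) := mul_nonneg (hineq t ht) (Real.exp_nonneg _)
        _ = y' t * Real.exp (P t) + y t * (Real.exp (P t) * p t) := by ring
  have hpos : 0 < y t * Real.exp (P t) := calc
    0 < y a * Real.exp (P a) := mul_pos hya (Real.exp_pos _)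
    _ ≤ y t * Real.exp (P t) := hmono self_mem_Ici ht ht
  exact pos_of_mul_pos_left hpos (Real.exp_nonneg _)

end OneSidedDerivatives

/-- `f` is a supersolution of the Blasius equation `f''' + f f'' = 0` on `[a, ∞)`, with successive
derivatives `f'`, `f''`, `f'''`. The derivatives are taken within `[a, ∞)`, so they are one-sided
at `a`. -/
structure IsBlasiusSupersolution (f f' f'' f''' : ℝ → ℝ) (a : ℝ) : Prop where
  hasDeriv : ∀ t ∈ Ici a, HasDerivWithinAt f (f' t) (Ici a) t
  hasDeriv' : ∀ t ∈ Ici a, HasDerivWithinAt f' (f'' t) (Ici a) t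
  hasDeriv'' : ∀ t ∈ Ici a, HasDerivWithinAt f'' (f''' t) (Ici a) t
  nonneg : ∀ t ∈ Ici a, 0 ≤ f''' t + f t * f'' t

namespace IsBlasiusSupersolution

variable {f f' f'' f''' : ℝ → ℝ} {a T : ℝ}

lemma mono (h : IsBlasiusSupersolution f f' f'' f''' a) (haT : a ≤ T) :
    IsBlasiusSupersolution f f' f'' f''' T := by
  have hsub : Ici T ⊆ Ici a := Ici_subset_Ici.2 haT
  exact ⟨fun t ht ↦ (h.hasDeriv t (hsub ht)).mono hsub,
    fun t ht ↦ (h.hasDeriv' t (hsub ht)).mono hsub,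
    fun t ht ↦ (h.hasDeriv'' t (hsub ht)).mono hsub, fun t ht ↦ h.nonneg t (hsub ht)⟩

lemma continuousOn (h : IsBlasiusSupersolution f f' f'' f''' a) : ContinuousOn f (Ici a) :=
  HasDerivWithinAt.continuousOn h.hasDeriv

lemma second_deriv_pos (h : IsBlasiusSupersolution f f' f'' f''' a) (ha : 0 < f'' a) :
    ∀ t ∈ Ici a, 0 < f'' t :=
  pos_of_nonneg_hasDerivWithinAt_add_mul h.continuousOn h.hasDeriv'' h.nonneg ha

lemma antitoneOn_of_second_deriv_pos (h : IsBlasiusSupersolution f f' f'' f''' a)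
    (ha : 0 < f'' a) (hlim : Tendsto f' atTop (𝓝 0)) : AntitoneOn f (Ici a) :=
  have hf'_mono : MonotoneOn f' (Ici a) :=
    monotoneOn_of_hasDerivWithinAt_self_nonneg (convex_Ici a) h.hasDeriv'
      fun t ht ↦ (h.second_deriv_pos ha t ht).le
  antitoneOn_of_hasDerivWithinAt_self_nonpos (convex_Ici a) h.hasDeriv
    (le_of_monotoneOn_Ici_of_tendsto hf'_mono hlim)

lemma apply_nonneg_of_second_deriv_pos (h : IsBlasiusSupersolution f f' f'' f''' a)
    (ha : 0 < f'' a) (hlim : Tendsto f' atTop (𝓝 0)) : 0 ≤ f a := by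
  by_contra! hneg
  have hf''_mono : MonotoneOn f'' (Ici a) := by
    refine monotoneOn_of_hasDerivWithinAt_self_nonneg (convex_Ici a) h.hasDeriv'' fun t ht ↦ ?_
    have hft : f t ≤ 0 :=
      (h.antitoneOn_of_second_deriv_pos ha hlim self_mem_Ici ht ht).trans hneg.le
    linarith [h.nonneg t ht,
      mul_nonpos_of_nonpos_of_nonneg hft (h.second_deriv_pos ha t ht).le]
  exact ha.not_ge <| nonpos_of_le_hasDerivWithinAt_of_tendsto h.hasDeriv'
    (fun t ht ↦ hf''_mono self_mem_Ici ht ht) hlim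

lemma abs_le_of_second_deriv_pos (h : IsBlasiusSupersolution f f' f'' f''' a)
    (ha : 0 < f'' a) (hlim : Tendsto f' atTop (𝓝 0)) : ∀ t ∈ Ici a, |f t| ≤ f a := by
  intro t ht
  have hft : 0 ≤ f t :=
    (h.mono ht).apply_nonneg_of_second_deriv_pos (h.second_deriv_pos ha t ht) hlim
  rw [abs_of_nonneg hft]
  exact h.antitoneOn_of_second_deriv_pos ha hlim self_mem_Ici ht ht

lemma deriv_nonneg_of_second_deriv_nonpos (h : IsBlasiusSupersolution f f' f'' f''' a)
    (hf'' : ∀ t ∈ Ici a, f'' t ≤ 0) (hlim : Tendsto f' atTop (𝓝 0)) : ∀ t ∈ Ici a, 0 ≤ f' t :=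
  ge_of_antitoneOn_Ici_of_tendsto
    (antitoneOn_of_hasDerivWithinAt_self_nonpos (convex_Ici a) h.hasDeriv' hf'') hlim

lemma monotoneOn_of_second_deriv_nonpos (h : IsBlasiusSupersolution f f' f'' f''' a)
    (hf'' : ∀ t ∈ Ici a, f'' t ≤ 0) (hlim : Tendsto f' atTop (𝓝 0)) : MonotoneOn f (Ici a) :=
  monotoneOn_of_hasDerivWithinAt_self_nonneg (convex_Ici a) h.hasDeriv
    (h.deriv_nonneg_of_second_deriv_nonpos hf'' hlim)

lemma second_deriv_add_deriv_nonpos (h : IsBlasiusSupersolution f f' f'' f''' a)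
    (hf'' : ∀ t ∈ Ici a, f'' t ≤ 0) (hlim : Tendsto f' atTop (𝓝 0)) (ha : 1 ≤ f a) :
    ∀ t ∈ Ici a, f'' t + f' t ≤ 0 := by
  have hmono : MonotoneOn (fun t ↦ f'' t + f' t) (Ici a) := by
    refine monotoneOn_of_hasDerivWithinAt_self_nonneg (convex_Ici a)
      (fun t ht ↦ (h.hasDeriv'' t ht).add (h.hasDeriv' t ht)) fun t ht ↦ ?_
    have hft : 1 ≤ f t :=
      ha.trans (h.monotoneOn_of_second_deriv_nonpos hf'' hlim self_mem_Ici ht ht)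
    calc
      0 ≤ f''' t + f t * f'' t := h.nonneg t ht
      _ ≤ f''' t + f'' t := by linarith [mul_le_of_one_le_left (hf'' t ht) hft]
  intro t ht
  refine ge_of_tendsto hlim <| (eventually_ge_atTop t).mono fun s hts ↦ ?_
  have has : s ∈ Ici a := ht.trans hts
  linarith [hmono ht has hts, hf'' s has]

lemma le_of_second_deriv_nonpos_of_one_le (h : IsBlasiusSupersolution f f' f'' f''' a)
    (hf'' : ∀ t ∈ Ici a, f'' t ≤ 0) (hlim : Tendsto f' atTop (𝓝 0)) (ha : 1 ≤ f a) :
    ∀ t ∈ Ici a, f t ≤ f' a + f a := by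
  intro t ht
  have hanti : AntitoneOn (fun t ↦ f' t + f t) (Ici a) :=
    antitoneOn_of_hasDerivWithinAt_self_nonpos (convex_Ici a)
      (fun t ht ↦ (h.hasDeriv' t ht).add (h.hasDeriv t ht))
      (h.second_deriv_add_deriv_nonpos hf'' hlim ha)
  calc
    f t ≤ f' t + f t :=
      le_add_of_nonneg_left (h.deriv_nonneg_of_second_deriv_nonpos hf'' hlim t ht)
    _ ≤ f' a + f a := hanti self_mem_Ici ht ht

lemma exists_le_of_second_deriv_nonpos (h : IsBlasiusSupersolution f f' f'' f''' a)
    (hf'' : ∀ t ∈ Ici a, f'' t ≤ 0) (hlim : Tendsto f' atTop (𝓝 0)) :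
    ∃ C, ∀ t ∈ Ici a, f t ≤ C := by
  by_cases hT : ∃ T ∈ Ici a, 1 ≤ f T
  · obtain ⟨T, haT, hfT⟩ := hT
    refine ⟨f' T + f T, fun t ht ↦ ?_⟩
    calc
      f t ≤ f (max t T) := h.monotoneOn_of_second_deriv_nonpos hf'' hlim ht
        (ht.trans (le_max_left t T)) (le_max_left t T)
      _ ≤ f' T + f T := (h.mono haT).le_of_second_deriv_nonpos_of_one_le
        (fun s hs ↦ hf'' s (Ici_subset_Ici.2 haT hs)) hlim hfT _ (le_max_right t T)
  · push Not at hT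
    exact ⟨1, fun t ht ↦ (hT t ht).le⟩

lemma exists_abs_le_of_second_deriv_nonpos (h : IsBlasiusSupersolution f f' f'' f''' a)
    (hf'' : ∀ t ∈ Ici a, f'' t ≤ 0) (hlim : Tendsto f' atTop (𝓝 0)) :
    ∃ M, ∀ t ∈ Ici a, |f t| ≤ M := by
  obtain ⟨C, hC⟩ := h.exists_le_of_second_deriv_nonpos hf'' hlim
  exact ⟨max |f a| |C|, fun t ht ↦ abs_le_max_abs_abs
    (h.monotoneOn_of_second_deriv_nonpos hf'' hlim self_mem_Ici ht ht) (hC t ht)⟩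

end IsBlasiusSupersolution

theorem stmt_17_general {f f' f'' f''' : ℝ → ℝ} {a : ℝ}
    (h : IsBlasiusSupersolution f f' f'' f''' a) (hlim : Tendsto f' atTop (𝓝 0)) :
    ∃ M, ∀ t ∈ Ici a, |f t| ≤ M := by
  by_cases hf'' : ∃ T ∈ Ici a, 0 < f'' T
  · obtain ⟨T, haT, hT⟩ := hf''
    exact exists_norm_le_Ici_of_continuousOn h.continuousOn
      ((h.mono haT).abs_le_of_second_deriv_pos hT hlim)
  · push Not at hf''
    exact h.exists_abs_le_of_second_deriv_nonpos hf'' hlim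

/-- Remark 6: for β ≥ 0, every non-constant solution of
f''' + f·f'' − β·(f')² = 0 on [t₀, ∞) with f'(t) → 0 at infinity is bounded. -/
theorem stmt_17 (β : ℝ) (hβ : 0 ≤ β) (t₀ : ℝ)
    (f f' f'' f''' : ℝ → ℝ)
    (hf1 : ∀ t ∈ Set.Ici t₀, HasDerivAt f (f' t) t)
    (hf2 : ∀ t ∈ Set.Ici t₀, HasDerivAt f' (f'' t) t)
    (hf3 : ∀ t ∈ Set.Ici t₀, HasDerivAt f'' (f''' t) t)
    (heq : ∀ t ∈ Set.Ici t₀, f''' t + f t * f'' t - β * (f' t) ^ 2 = 0)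
    (hnc : ¬ ∃ c : ℝ, ∀ t ∈ Set.Ici t₀, f t = c)
    (hlim : Filter.Tendsto f' Filter.atTop (nhds 0)) :
    ∃ M : ℝ, ∀ t ∈ Set.Ici t₀, |f t| ≤ M :=
  stmt_17_general ⟨fun t ht ↦ (hf1 t ht).hasDerivWithinAt, fun t ht ↦ (hf2 t ht).hasDerivWithinAt,
    fun t ht ↦ (hf3 t ht).hasDerivWithinAt,
    fun t ht ↦ by linarith [heq t ht, mul_nonneg hβ (sq_nonneg (f' t))]⟩ hlim
end
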